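/- arXiv:0802.2651 — 4 statements merged into one kernel-verified Lean document; each statement's English description precedes it below -/
import Mathlib

section
/- Let N be a positive squarefree integer, let P = (a, b) be a non-torsion integral point of E_N(ℚ), and let n ≥ 3 be an odd integer such that nP is integral. Then for every prime l not dividing 2n, ord_l(ψ_n(P)) = ((n² − 1)/2) · ord_l(gcd(a, N)). -/
/-- The congruent number curve `E_N : y² = x³ - N²x` over `ℚ`. -/
def congruentCurve (N : ℕ) : WeierstrassCurve.Affine ℚ :=
  { a₁ := 0, a₂ := 0, a₃ := 0, a₄ := -(N : ℚ) ^ 2, a₆ := 0 }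

/-- The congruent number curve `E_N : y² = x³ - N²x` over `ℤ`. -/
def congruentCurveZ (N : ℕ) : WeierstrassCurve ℤ :=
  { a₁ := 0, a₂ := 0, a₃ := 0, a₄ := -(N : ℤ) ^ 2, a₆ := 0 }

/-- The value `ψₙ(P)` of the `n`-th division polynomial of `E_N` at the integral point
`P = (a, b)`. -/
noncomputable def psiEN (N : ℕ) (a b : ℤ) (n : ℤ) : ℤ :=
  ((congruentCurveZ N).Ψ n).evalEval a b

/-- A rational point on a Weierstrass curve over `ℚ` is integral if it is an affine point
whose `x`-coordinate is an integer. -/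
def IsIntegralPoint {W : WeierstrassCurve.Affine ℚ} (P : W.Point) : Prop :=
  ∃ (x y : ℚ) (h : W.Nonsingular x y),
    P = WeierstrassCurve.Affine.Point.some x y h ∧ x.den = 1


open WeierstrassCurve in
/-- x-coordinate, junk value 0 at infinity. -/
def xc {W : WeierstrassCurve.Affine ℚ} : W.Point → ℚ
  | .zero => 0
  | .some x _ _ => x

lemma geo_add (N : ℕ) (P Q : (congruentCurve N).Point) (hP : P ≠ 0) (hQ : Q ≠ 0)
    (hne : xc P ≠ xc Q) :
    (xc (P + Q) + xc (P - Q)) * (xc P - xc Q) ^ 2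
        = 2 * (xc P + xc Q) * (xc P * xc Q - (N : ℚ) ^ 2) ∧
    (xc (P + Q) * xc (P - Q)) * (xc P - xc Q) ^ 2
        = (xc P * xc Q + (N : ℚ) ^ 2) ^ 2 := by
  rcases P with _ | ⟨x₁, y₁, h₁⟩
  · exact absurd rfl hP
  rcases Q with _ | ⟨x₂, y₂, h₂⟩
  · exact absurd rfl hQ
  have hx : x₁ ≠ x₂ := hne
  have e₁ := h₁.1
  have e₂ := h₂.1
  rw [WeierstrassCurve.Affine.equation_iff] at e₁ e₂
  simp only [congruentCurve] at e₁ e₂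
  rw [sub_eq_add_neg, WeierstrassCurve.Affine.Point.neg_some,
    WeierstrassCurve.Affine.Point.add_of_X_ne hx, WeierstrassCurve.Affine.Point.add_of_X_ne hx]
  simp only [xc, WeierstrassCurve.Affine.addX, WeierstrassCurve.Affine.slope_of_X_ne hx,
    WeierstrassCurve.Affine.negY]
  simp only [congruentCurve]
  have hd : x₁ - x₂ ≠ 0 := sub_ne_zero.mpr hx
  have f₁ : y₁ ^ 2 = x₁ ^ 3 - (N : ℚ) ^ 2 * x₁ := by linarith
  have f₂ : y₂ ^ 2 = x₂ ^ 3 - (N : ℚ) ^ 2 * x₂ := by linarith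
  constructor
  · field_simp
    linear_combination 2 * f₁ + 2 * f₂
  · field_simp
    have f₃ : y₁ ^ 4 = (x₁ ^ 3 - (N : ℚ) ^ 2 * x₁) ^ 2 := by rw [← f₁]; ring
    have f₄ : y₂ ^ 4 = (x₂ ^ 3 - (N : ℚ) ^ 2 * x₂) ^ 2 := by rw [← f₂]; ring
    have f₅ : y₁ ^ 2 * y₂ ^ 2 = (x₁ ^ 3 - (N : ℚ) ^ 2 * x₁) * (x₂ ^ 3 - (N : ℚ) ^ 2 * x₂) := by
      rw [f₁, f₂]
    linear_combination f₃ + f₄ - 2 * f₅ - 2 * (x₁ + x₂) * (x₁ - x₂) ^ 2 * (f₁ + f₂)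

lemma geo_dbl (N : ℕ) (a b : ℚ) (h : (congruentCurve N).Nonsingular a b) (hb : b ≠ 0) :
    xc ((2 : ℕ) • (WeierstrassCurve.Affine.Point.some _ _ h)) * (4 * b ^ 2)
      = (a ^ 2 + (N : ℚ) ^ 2) ^ 2 := by
  have e := h.1
  rw [WeierstrassCurve.Affine.equation_iff] at e
  simp only [congruentCurve] at e
  have f : b ^ 2 = a ^ 3 - (N : ℚ) ^ 2 * a := by linarith
  have hy : b ≠ (congruentCurve N).negY a b := by
    simp only [WeierstrassCurve.Affine.negY, congruentCurve]
    intro h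
    apply hb
    linarith
  rw [two_nsmul, WeierstrassCurve.Affine.Point.add_self_of_Y_ne hy]
  simp only [xc, WeierstrassCurve.Affine.addX, WeierstrassCurve.Affine.slope_of_Y_ne rfl hy]
  simp only [WeierstrassCurve.Affine.negY, congruentCurve]
  have h2 : b - (-b - 0 * a - 0) ≠ 0 := by
    intro h; apply hb; linarith
  have h3 : b - (-b - 0 * a - 0) = 2 * b := by ring
  rw [h3]
  field_simp
  linear_combination (-32 * a) * f

lemma geo_eq_iff (N : ℕ) (P Q : (congruentCurve N).Point) (hP : P ≠ 0) (hQ : Q ≠ 0) :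
    xc P = xc Q → P + Q = 0 ∨ P - Q = 0 := by
  intro hx
  rcases P with _ | ⟨x₁, y₁, h₁⟩
  · exact absurd rfl hP
  rcases Q with _ | ⟨x₂, y₂, h₂⟩
  · exact absurd rfl hQ
  have hx : x₁ = x₂ := hx
  rcases WeierstrassCurve.Affine.Point.X_eq_iff.mp hx with h | h
  · right; rw [h]; exact sub_self _
  · left; rw [h]; exact neg_add_cancel _

/-- Abstract form of the identity among three points. -/
lemma geo_three (N : ℚ) {x₁ x₂ x₃ s t : ℚ} 
    (h1 : (s + t) * (x₁ - x₂) ^ 2 = 2 * (x₁ + x₂) * (x₁ * x₂ - N ^ 2))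
    (h2 : (s * t) * (x₁ - x₂) ^ 2 = (x₁ * x₂ + N ^ 2) ^ 2) :
    (s - x₃) * (t - x₃) * (x₁ - x₂) ^ 2 =
      (x₁ * x₂ + N ^ 2) ^ 2 - 2 * (x₁ + x₂) * (x₁ * x₂ - N ^ 2) * x₃ + (x₁ - x₂) ^ 2 * x₃ ^ 2 := by
  linear_combination h2 - x₃ * h1

/-- The sequence defined from x-coordinates. -/
noncomputable def vseq (a b : ℚ) (x : ℕ → ℚ) : ℕ → ℚ
  | 0 => 0
  | 1 => 1
  | 2 => 2 * b
  | (k + 3) => (a - x (k + 2)) * vseq a b x (k + 2) ^ 2 / vseq a b x (k + 1)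

section seq
variable {N a b : ℚ} {x : ℕ → ℚ} (f : b ^ 2 = a ^ 3 - N ^ 2 * a) (hb : b ≠ 0) (hx1 : x 1 = a)
  (hx2 : x 2 * (4 * b ^ 2) = (a ^ 2 + N ^ 2) ^ 2)
  (hne : ∀ m n, 1 ≤ n → n < m → x m ≠ x n)
  (hs : ∀ m n, 1 ≤ n → n < m → (x (m + n) + x (m - n)) * (x m - x n) ^ 2 =
    2 * (x m + x n) * (x m * x n - N ^ 2))
  (hp : ∀ m n, 1 ≤ n → n < m → (x (m + n) * x (m - n)) * (x m - x n) ^ 2 =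
    (x m * x n + N ^ 2) ^ 2)

include hb hx1 hne in
lemma vseq_ne : ∀ k, vseq a b x (k + 1) ≠ 0
  | 0 => by simp [vseq]
  | 1 => by simp [vseq, hb]
  | (k + 2) => by
    have h1 := vseq_ne k
    have h2 := vseq_ne (k + 1)
    have := hne (k + 2) 1 le_rfl (by omega)
    rw [hx1] at this
    rw [vseq]
    exact div_ne_zero (mul_ne_zero (sub_ne_zero.mpr this.symm) (pow_ne_zero _ h2)) h1

include hb hx1 hne in
lemma vseq_E1 (m : ℕ) (hm : 1 ≤ m) :
    vseq a b x (m + 1) * vseq a b x (m - 1) = vseq a b x m ^ 2 * (a - x m) := by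
  rcases m with _ | _ | k
  · omega
  · simp [vseq, hx1]
  · have h1 := vseq_ne hb hx1 hne k
    show vseq a b x (k + 3) * vseq a b x (k + 1) = vseq a b x (k + 2) ^ 2 * (a - x (k + 2))
    rw [vseq]
    field_simp

include f hb hx1 hx2 hne hs hp in
lemma vseq_E2 (m : ℕ) (hm : 3 ≤ m) :
    vseq a b x (m + 2) * vseq a b x (m - 2)
      = vseq a b x m ^ 2 * vseq a b x 2 ^ 2 * (x 2 - x m) := by
  obtain ⟨k, rfl⟩ : ∃ k, m = k + 3 := ⟨m - 3, by omega⟩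
  have e0 : vseq a b x (k + 4) * vseq a b x (k + 2) = vseq a b x (k + 3) ^ 2 * (a - x (k + 3)) :=
    vseq_E1 hb hx1 hne (k + 3) (by omega)
  have e1 : vseq a b x (k + 5) * vseq a b x (k + 3) = vseq a b x (k + 4) ^ 2 * (a - x (k + 4)) :=
    vseq_E1 hb hx1 hne (k + 4) (by omega)
  have e2 : vseq a b x (k + 3) * vseq a b x (k + 1) = vseq a b x (k + 2) ^ 2 * (a - x (k + 2)) :=
    vseq_E1 hb hx1 hne (k + 2) (by omega)
  have n0 : vseq a b x (k + 3) ≠ 0 := vseq_ne hb hx1 hne (k + 2)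
  have S := hs (k + 3) 1 le_rfl (by omega)
  have T := hp (k + 3) 1 le_rfl (by omega)
  have G := geo_three N (x₃ := a) S T
  rw [hx1, show k + 3 + 1 = k + 4 from rfl, show k + 3 - 1 = k + 2 from rfl] at G
  change vseq a b x (k + 5) * vseq a b x (k + 1) = _
  clear S T hs hp hne
  have v2 : vseq a b x 2 = 2 * b := rfl
  rw [v2]
  generalize vseq a b x (k + 1) = A at *
  generalize vseq a b x (k + 2) = B at *
  generalize vseq a b x (k + 3) = C at *
  generalize vseq a b x (k + 4) = D at *
  generalize vseq a b x (k + 5) = F at *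
  generalize x (k + 2) = p at *
  generalize x (k + 3) = q at *
  generalize x (k + 4) = r at *
  have n0' : C ^ 2 ≠ 0 := pow_ne_zero _ n0
  apply mul_left_cancel₀ n0'
  -- C^2 F A = r_{m+1} r_{m-1} D^2 B^2 
  calc C ^ 2 * (F * A) = (F * C) * (C * A) := by ring
    _ = (a - r) * (a - p) * (D * B) ^ 2 := by rw [e1, e2]; ring
    _ = (r - a) * (p - a) * (q - a) ^ 2 * C ^ 4 := by rw [e0]; ring
    _ = C ^ 2 * (C ^ 2 * (2 * b) ^ 2 * (x 2 - q)) := by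
      rw [G]
      linear_combination C ^ 4 * (-hx2 + 4 * q * f)

include f hb hx1 hx2 hne hs hp in
lemma vseq_E (n : ℕ) : ∀ m, n + 1 < m →
    vseq a b x (m + (n + 1)) * vseq a b x (m - (n + 1))
      = vseq a b x m ^ 2 * vseq a b x (n + 1) ^ 2 * (x (n + 1) - x m) := by
  induction n using Nat.strong_induction_on with
  | _ n ih =>
  rcases n with _ | _ | n
  · intro m hm
    rw [vseq_E1 hb hx1 hne m (by omega)]
    simp [vseq, hx1]
  · intro m hm
    exact vseq_E2 f hb hx1 hx2 hne hs hp m (by omega)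
  · intro m hm
    obtain ⟨k, rfl⟩ := Nat.exists_eq_add_of_lt hm
    have h1 := ih (n + 1) (by omega) (n + 1 + 1 + 1 + k + 1) (by omega)
    have h0 := ih n (by omega) (n + 1 + 1 + 1 + k + 1) (by omega)
    have e0 := vseq_E1 hb hx1 hne (n + 2) (by omega)
    have e1 := vseq_E1 hb hx1 hne (n + 1 + 1 + 1 + k + 1 + (n + 2)) (by omega)
    have e2 := vseq_E1 hb hx1 hne (k + 2) (by omega)
    have g1 := geo_three N (x₃ := x (n + 1 + 1 + 1 + k + 1)) (hs (n + 2) 1 le_rfl (by omega))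
      (hp (n + 2) 1 le_rfl (by omega))
    have g2 := geo_three N (x₃ := a) (hs (n + 1 + 1 + 1 + k + 1) (n + 2) (by omega) (by omega))
      (hp (n + 1 + 1 + 1 + k + 1) (n + 2) (by omega) (by omega))
    have n1 := vseq_ne hb hx1 hne (n + 1 + 1 + 1 + k + 1 + n)
    have n2 := vseq_ne hb hx1 hne (k + 2)
    rw [hx1] at g1
    have j1 : n + 1 + 1 + 1 + k + 1 = n + k + 4 := by omega
    have j2 : n + k + 4 - (n + 1 + 1) = k + 2 := by omega
    have j3 : n + k + 4 - (n + 1) = k + 3 := by omega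
    have j4 : n + k + 4 - (n + 1 + 1 + 1) = k + 1 := by omega
    have j5 : n + k + 4 + (n + 1 + 1) = 2 * n + k + 6 := by omega
    have j6 : n + k + 4 + (n + 1) = 2 * n + k + 5 := by omega
    have j7 : n + k + 4 + (n + 1 + 1 + 1) = 2 * n + k + 7 := by omega
    have j8 : n + k + 4 + (n + 2) = 2 * n + k + 6 := by omega
    have j9 : 2 * n + k + 6 + 1 = 2 * n + k + 7 := by omega
    have j10 : 2 * n + k + 6 - 1 = 2 * n + k + 5 := by omega
    have j11 : n + k + 4 + n + 1 = 2 * n + k + 5 := by omega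
    have j12 : n + k + 4 - (n + 2) = k + 2 := by omega
    have j13 : n + 2 - 1 = n + 1 := by omega
    have j14 : k + 2 - 1 = k + 1 := by omega
    have j15 : n + 1 + 1 + 1 = n + 3 := rfl
    have j16 : n + 1 + 1 = n + 2 := rfl
    have j17 : n + 2 + 1 = n + 3 := rfl
    have j18 : k + 2 + 1 = k + 3 := rfl
    rw [j1, j2, j5, j16] at h1
    rw [j1, j3, j6] at h0
    rw [j13, j17] at e0
    rw [j1, j8, j9, j10] at e1
    rw [j14, j18] at e2
    rw [j1, j13, j17] at g1
    rw [j1, j8, j12] at g2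
    rw [j1, j11] at n1
    rw [j18] at n2
    rw [j1, j4, j7, j15]
    clear j1 j2 j3 j4 j5 j6 j7 j8 j9 j10 j11 j12 j13 j14 j15 j16 j17 j18 ih hs hp hne
    generalize vseq a b x (n + k + 4) = M at *
    generalize vseq a b x (2 * n + k + 5) = A5 at *
    generalize vseq a b x (2 * n + k + 6) = A6 at *
    generalize vseq a b x (2 * n + k + 7) = A7 at *
    generalize vseq a b x (k + 1) = B1 at *
    generalize vseq a b x (k + 2) = B2 at *
    generalize vseq a b x (k + 3) = B3 at *
    generalize vseq a b x (n + 1) = C1 at *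
    generalize vseq a b x (n + 2) = C2 at *
    generalize vseq a b x (n + 3) = C3 at *
    generalize x (n + k + 4) = xm at *
    generalize x (n + 1) = x1 at *
    generalize x (n + 2) = x2 at *
    generalize x (n + 3) = x3 at *
    generalize x (k + 2) = y2 at *
    generalize x (2 * n + k + 6) = y6 at *
    apply mul_left_cancel₀ (mul_ne_zero n1 n2)
    calc A5 * B3 * (A7 * B1) = (A7 * A5) * (B3 * B1) := by ring
      _ = (y6 - a) * (y2 - a) * (A6 * B2) ^ 2 := by rw [e1, e2]; ring
      _ = ((y6 - a) * (y2 - a) * (xm - x2) ^ 2) * (M ^ 4 * C2 ^ 4) := by rw [h1]; ring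
      _ = ((x3 - xm) * (x1 - xm) * (x2 - a) ^ 2) * (M ^ 4 * C2 ^ 4) := by rw [g1, g2]; ring
      _ = (x3 - xm) * (x1 - xm) * M ^ 4 * (C3 * C1) ^ 2 := by rw [e0]; ring
      _ = A5 * B3 * (M ^ 2 * C3 ^ 2 * (x3 - xm)) := by rw [h0]; ring

include f hb hx1 hx2 hne hs hp in
lemma vseq_eq (c d : ℚ) (hc : c = 3 * a ^ 4 - 6 * N ^ 2 * a ^ 2 - N ^ 4)
    (hd : d = 2 * a ^ 6 - 10 * N ^ 2 * a ^ 4 - 10 * N ^ 4 * a ^ 2 + 2 * N ^ 6) (k : ℕ) :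
    vseq a b x k = normEDS (2 * b) c d k := by
  have h3 : vseq a b x 3 = c := by
    simp only [vseq]
    rw [hc]
    linear_combination -hx2 + 4 * a * f
  have h3x : c = 4 * b ^ 2 * (a - x 2) := by
    rw [hc]
    linear_combination hx2 - 4 * a * f
  have h4 : vseq a b x 4 = d * (2 * b) := by
    have e := vseq_E1 hb hx1 hne 3 (by omega)
    have S := hs 2 1 (by omega) (by omega)
    simp only [Nat.reduceAdd, Nat.reduceSub, hx1, h3, show vseq a b x 2 = 2 * b from rfl] at e S
    have hb2 : 2 * b ≠ 0 := by simpa using hb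
    apply mul_right_cancel₀ hb2
    rw [e]
    have hx2' : x 2 = (a ^ 2 + N ^ 2) ^ 2 / (4 * b ^ 2) := by
      rw [← hx2]; field_simp
    have key : c ^ 2 * (a - x 3) =
      16 * b ^ 4 * (2 * a * (x 2 - a) ^ 2 - 2 * (x 2 + a) * (x 2 * a - N ^ 2)) := by
      rw [h3x]
      linear_combination (-16 * b ^ 4) * S
    rw [key, hd]
    have : x 2 ^ 2 * (16 * b ^ 4) = (a ^ 2 + N ^ 2) ^ 4 := by
      calc _ = (x 2 * (4 * b ^ 2)) ^ 2 := by ring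
        _ = _ := by rw [hx2]; ring
    have key2 : 16 * b ^ 4 * (2 * a * (x 2 - a) ^ 2 - 2 * (x 2 + a) * (x 2 * a - N ^ 2))
       = (-6 * a ^ 2 + 2 * N ^ 2) * (4 * b ^ 2) * (x 2 * (4 * b ^ 2))
        + (2 * a ^ 3 + 2 * a * N ^ 2) * 16 * (b ^ 2) ^ 2 := by ring
    rw [key2, hx2]
    have key3 : d * (2 * b) * (2 * b) = d * 4 * b ^ 2 := by ring
    rw [show (2 * a ^ 6 - 10 * N ^ 2 * a ^ 4 - 10 * N ^ 4 * a ^ 2 + 2 * N ^ 6) * (2 * b) * (2 * b)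
      = (2 * a ^ 6 - 10 * N ^ 2 * a ^ 4 - 10 * N ^ 4 * a ^ 2 + 2 * N ^ 6) * 4 * b ^ 2 by ring, f]
    ring
  induction k using Nat.strong_induction_on with
  | _ k ih =>
  by_cases hk : k < 5
  · interval_cases k
    · simp [vseq]
    · simp [vseq]
    · simp [vseq]
    · simpa using h3
    · simpa using h4
  rcases Nat.even_or_odd' k with ⟨m, rfl | rfl⟩
  · obtain ⟨j, rfl⟩ : ∃ j, m = j + 3 := ⟨m - 3, by omega⟩
    have hb2 : 2 * b ≠ 0 := by simpa using hb
    apply mul_right_cancel₀ hb2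
    have R := normEDS_even (2 * b) c d ((j + 3 : ℕ) : ℤ)
    rw [show (((j + 3 : ℕ) : ℤ) - 1) = ((j + 2 : ℕ) : ℤ) by push_cast; ring,
      show (((j + 3 : ℕ) : ℤ) + 2) = ((j + 5 : ℕ) : ℤ) by push_cast; ring,
      show (((j + 3 : ℕ) : ℤ) - 2) = ((j + 1 : ℕ) : ℤ) by push_cast; ring,
      show (((j + 3 : ℕ) : ℤ) + 1) = ((j + 4 : ℕ) : ℤ) by push_cast; ring,
      ← ih (j + 1) (by omega), ← ih (j + 2) (by omega), ← ih (j + 3) (by omega),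
      ← ih (j + 4) (by omega), ← ih (j + 5) (by omega)] at R
    rw [show ((2 * (j + 3) : ℕ) : ℤ) = 2 * ((j + 3 : ℕ) : ℤ) by push_cast; ring, R]
    have E := vseq_E f hb hx1 hx2 hne hs hp (j + 1) (j + 4) (by omega)
    have e1 := vseq_E1 hb hx1 hne (j + 2) (by omega)
    have e2 := vseq_E1 hb hx1 hne (j + 4) (by omega)
    rw [show j + 4 + (j + 1 + 1) = 2 * (j + 3) by ring,
      show j + 4 - (j + 1 + 1) = 2 by omega, show vseq a b x 2 = 2 * b from rfl,
      show j + 1 + 1 = j + 2 from rfl] at E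
    rw [show j + 2 - 1 = j + 1 by omega, show j + 2 + 1 = j + 3 from rfl] at e1
    rw [show j + 4 - 1 = j + 3 by omega, show j + 4 + 1 = j + 5 from rfl] at e2
    rw [E]
    linear_combination vseq a b x (j + 4) ^ 2 * e1 - vseq a b x (j + 2) ^ 2 * e2
  · obtain ⟨j, rfl⟩ : ∃ j, m = j + 2 := ⟨m - 2, by omega⟩
    have R := normEDS_odd (2 * b) c d ((j + 2 : ℕ) : ℤ)
    rw [show (((j + 2 : ℕ) : ℤ) - 1) = ((j + 1 : ℕ) : ℤ) by push_cast; ring,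
      show (((j + 2 : ℕ) : ℤ) + 2) = ((j + 4 : ℕ) : ℤ) by push_cast; ring,
      show (((j + 2 : ℕ) : ℤ) + 1) = ((j + 3 : ℕ) : ℤ) by push_cast; ring,
      ← ih (j + 1) (by omega), ← ih (j + 2) (by omega), ← ih (j + 3) (by omega),
      ← ih (j + 4) (by omega)] at R
    rw [show ((2 * (j + 2) + 1 : ℕ) : ℤ) = 2 * ((j + 2 : ℕ) : ℤ) + 1 by push_cast; ring, R]
    have E := vseq_E f hb hx1 hx2 hne hs hp (j + 1) (j + 3) (by omega)
    have e1 := vseq_E1 hb hx1 hne (j + 2) (by omega)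
    have e2 := vseq_E1 hb hx1 hne (j + 3) (by omega)
    rw [show j + 3 + (j + 1 + 1) = 2 * (j + 2) + 1 by ring,
      show j + 3 - (j + 1 + 1) = 1 by omega, show vseq a b x 1 = 1 from rfl,
      show j + 1 + 1 = j + 2 from rfl, mul_one] at E
    rw [show j + 2 - 1 = j + 1 by omega, show j + 2 + 1 = j + 3 from rfl] at e1
    rw [show j + 3 - 1 = j + 2 by omega, show j + 3 + 1 = j + 4 from rfl] at e2
    rw [E]
    linear_combination vseq a b x (j + 3) ^ 2 * e1 - vseq a b x (j + 2) ^ 2 * e2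

include f hb hx1 hx2 hne hs hp in
lemma vseq_rel (m n : ℕ) (hn : 1 ≤ n) (hm : n < m) :
    vseq a b x (m + n) * vseq a b x (m - n) =
      vseq a b x (m + 1) * vseq a b x (m - 1) * vseq a b x n ^ 2 -
      vseq a b x (n + 1) * vseq a b x (n - 1) * vseq a b x m ^ 2 := by
  obtain ⟨k, rfl⟩ : ∃ k, n = k + 1 := ⟨n - 1, by omega⟩
  rw [vseq_E f hb hx1 hx2 hne hs hp k m hm, vseq_E1 hb hx1 hne m (by omega),
    vseq_E1 hb hx1 hne (k + 1) (by omega)]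
  ring

end seq

lemma base_sing {K : Type*} [Field K] (h2 : (2 : K) ≠ 0) {a b N : K}
    (f : b ^ 2 = a ^ 3 - N ^ 2 * a) (hns : ¬ (a = 0 ∧ N = 0))
    (hc : 3 * a ^ 4 - 6 * N ^ 2 * a ^ 2 - N ^ 4 = 0) (hb : b = 0) : False := by
  have h : a * (a ^ 2 - N ^ 2) = 0 := by
    rw [hb] at f; linear_combination -f
  rcases mul_eq_zero.mp h with h | h
  · apply hns
    refine ⟨h, ?_⟩
    have : N ^ 4 = 0 := by rw [h] at hc; linear_combination -hc
    exact pow_eq_zero_iff (by norm_num) |>.mp this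
  · have hN : (2 : K) ^ 2 * N ^ 4 = 0 := by
      linear_combination -hc + (3 * a ^ 2 - 3 * N ^ 2) * h
    have hN0 : N = 0 := by
      rcases mul_eq_zero.mp hN with h' | h'
      · exact absurd h' (pow_ne_zero _ h2)
      · exact pow_eq_zero_iff (by norm_num) |>.mp h'
    refine hns ⟨?_, hN0⟩
    rw [hN0] at h
    have : a ^ 2 = 0 := by linear_combination h
    exact pow_eq_zero_iff (by norm_num) |>.mp this

lemma base_sing' {K : Type*} [Field K] (h2 : (2 : K) ≠ 0) {a N : K}
    (hns : ¬ (a = 0 ∧ N = 0))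
    (hc : 3 * a ^ 4 - 6 * N ^ 2 * a ^ 2 - N ^ 4 = 0)
    (hd : 2 * a ^ 6 - 10 * N ^ 2 * a ^ 4 - 10 * N ^ 4 * a ^ 2 + 2 * N ^ 6 = 0) : False := by
  have sq : ∀ z : K, z ^ 2 = 0 → z = 0 := fun z h => pow_eq_zero_iff (by norm_num) |>.mp h
  have can : ∀ (k : ℕ) (z : K), 2 ^ k * z = 0 → z = 0 := fun k z h => by
    rcases mul_eq_zero.mp h with h' | h'
    · exact absurd h' (pow_ne_zero _ h2)
    · exact h'
  have hN0 : N = 0 → False := by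
    intro h
    rw [h] at hd
    have : a ^ 6 = 0 := can 1 _ (by linear_combination hd)
    exact hns ⟨pow_eq_zero_iff (by norm_num) |>.mp this, h⟩
  have h : (a ^ 2 + N ^ 2) * (a ^ 4 - 6 * a ^ 2 * N ^ 2 + N ^ 4) = 0 :=
    can 1 _ (by linear_combination hd)
  rcases mul_eq_zero.mp h with h | h
  · have : (2 : K) ^ 3 * (N ^ 4) = 0 := by
      linear_combination hc - (3 * a ^ 2 - 9 * N ^ 2) * h
    have := can 3 _ this
    exact hN0 (pow_eq_zero_iff (by norm_num) |>.mp this)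
  · have h3 : N ^ 2 * (3 * a ^ 2 - N ^ 2) = 0 := can 2 _ (by linear_combination hc - 3 * h)
    rcases mul_eq_zero.mp h3 with h4 | h4
    · exact hN0 (sq _ h4)
    · have : (2 : K) ^ 3 * (a ^ 4) = 0 := by
        linear_combination - h + (3 * a ^ 2 - N ^ 2) * h4
      have := can 3 _ this
      have ha : a = 0 := pow_eq_zero_iff (by norm_num) |>.mp this
      rw [ha] at h4
      exact hN0 (sq _ (by linear_combination -h4))

lemma no_consec {K : Type*} [Field K] (h2 : (2 : K) ≠ 0) {a b N : K}
    (f : b ^ 2 = a ^ 3 - N ^ 2 * a) (hns : ¬ (a = 0 ∧ N = 0)) (w : ℕ → K)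
    (w1 : w 1 = 1) (w2 : w 2 = 2 * b) (w3 : w 3 = 3 * a ^ 4 - 6 * N ^ 2 * a ^ 2 - N ^ 4)
    (w4 : w 4 = (2 * a ^ 6 - 10 * N ^ 2 * a ^ 4 - 10 * N ^ 4 * a ^ 2 + 2 * N ^ 6) * (2 * b))
    (E : ∀ m n, 1 ≤ n → n < m → w (m + n) * w (m - n) =
      w (m + 1) * w (m - 1) * w n ^ 2 - w (n + 1) * w (n - 1) * w m ^ 2) :
    ∀ r, 1 ≤ r → w r = 0 → w (r + 1) = 0 → False := by
  have c23 : w 2 = 0 → w 3 = 0 → False := by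
    intro h h'
    rw [w2] at h
    rw [w3] at h'
    exact base_sing h2 f hns h' ((mul_eq_zero.mp h).resolve_left h2)
  have c34 : w 3 = 0 → w 4 = 0 → False := by
    intro h h'
    rw [w4] at h'
    rcases mul_eq_zero.mp h' with h' | h'
    · rw [w3] at h; exact base_sing' h2 hns h h'
    · rw [← w2] at h'; exact c23 h' h
  intro r
  induction r using Nat.strong_induction_on with
  | _ r ih =>
  intro hr1 hr hr'
  rcases r with _ | _ | _ | _ | s
  · omega
  · rw [w1] at hr; exact one_ne_zero hr
  · exact c23 hr hr'
  · exact c34 hr hr'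
  -- r = s + 4
  have hp : w (s + 3) ≠ 0 := fun h => ih (s + 3) (by omega) (by omega) h hr
  have h3 : w 3 = 0 := by
    have e : w (s + 5) * w (s + 1) = w (s + 4) * w (s + 2) * w 2 ^ 2 - w 3 * w 1 * w (s + 3) ^ 2 :=
      E (s + 3) 2 (by omega) (by omega)
    rw [hr', hr, w1] at e
    have : w 3 * w (s + 3) ^ 2 = 0 := by linear_combination e
    exact (mul_eq_zero.mp this).resolve_right (pow_ne_zero _ hp)
  have hn2 : w 2 ≠ 0 := fun h => c23 h h3
  have hn4 : w 4 ≠ 0 := fun h => c34 h3 h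
  rcases s with _ | s
  · exact hn4 hr
  -- r = s + 5
  have h4 : w (s + 3) = 0 := by
    rcases s with _ | s
    · exact h3
    have e : w (s + 7) * w (s + 1) = w (s + 5) * w (s + 3) * w 3 ^ 2 - w 4 * w 2 * w (s + 4) ^ 2 :=
      E (s + 4) 3 (by omega) (by omega)
    have hr' : w (s + 7) = 0 := hr'
    rw [hr', h3] at e
    have : (w 4 * w 2) * w (s + 4) ^ 2 = 0 := by linear_combination e
    have := (mul_eq_zero.mp this).resolve_left (mul_ne_zero hn4 hn2)
    exact pow_eq_zero_iff (by norm_num) |>.mp this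
  have h5 : w (s + 2) = 0 := by
    have e : w (s + 5) * w (s + 1) = w (s + 4) * w (s + 2) * w 2 ^ 2 - w 3 * w 1 * w (s + 3) ^ 2 :=
      E (s + 3) 2 (by omega) (by omega)
    have hr : w (s + 5) = 0 := hr
    rw [hr, h3] at e
    have : (w (s + 4) * w 2 ^ 2) * w (s + 2) = 0 := by linear_combination -e
    exact (mul_eq_zero.mp this).resolve_left (mul_ne_zero hp (pow_ne_zero _ hn2))
  exact ih (s + 2) (by omega) (by omega) h5 h4

lemma pre_ne_zero {K : Type*} [Field K] {c d : K} (hc : c ≠ 0) (j : ℕ) :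
    preNormEDS' 0 c d (2 * j + 1) ≠ 0 := by
  induction j using Nat.strong_induction_on with
  | _ j ih =>
  rcases j with _ | _ | m
  · simp
  · simpa using hc
  · rw [preNormEDS'_odd]
    rcases Nat.even_or_odd' m with ⟨i, rfl | rfl⟩
    · rw [if_pos (by simp), if_pos (by simp)]
      have h1 := ih i (by omega)
      have h2 := ih (i + 1) (by omega)
      rw [show 2 * (i + 1) + 1 = 2 * i + 3 by ring] at h2
      simp [h1, h2]
    · rw [if_neg (by simp), if_neg (by simp)]
      have h1 := ih (i + 1) (by omega)
      have h2 := ih (i + 2) (by omega)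
      rw [show 2 * (i + 1) + 1 = 2 * i + 1 + 2 by ring] at h1
      rw [show 2 * (i + 2) + 1 = 2 * i + 1 + 4 by ring] at h2
      simp [h1, h2]

lemma pre_scale {t : ℤ} (ht : t ≠ 0) (B c d : ℤ) (n : ℕ) :
    (∀ j, n = 2 * j → t ^ 2 * preNormEDS' (t ^ 6 * B) (t ^ 4 * c) (t ^ 6 * d) n
      = t ^ (2 * j ^ 2) * preNormEDS' B c d n) ∧
    (∀ j, n = 2 * j + 1 → preNormEDS' (t ^ 6 * B) (t ^ 4 * c) (t ^ 6 * d) n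
      = t ^ (2 * j ^ 2 + 2 * j) * preNormEDS' B c d n) := by
  induction n using Nat.strong_induction_on with
  | _ n ih =>
  have ev : ∀ j, 2 * j < n → t ^ 2 * preNormEDS' (t ^ 6 * B) (t ^ 4 * c) (t ^ 6 * d) (2 * j)
      = t ^ (2 * j ^ 2) * preNormEDS' B c d (2 * j) := fun j h => (ih _ h).1 j rfl
  have od : ∀ j, 2 * j + 1 < n → preNormEDS' (t ^ 6 * B) (t ^ 4 * c) (t ^ 6 * d) (2 * j + 1)
      = t ^ (2 * j ^ 2 + 2 * j) * preNormEDS' B c d (2 * j + 1) := fun j h => (ih _ h).2 j rfl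
  clear ih
  constructor
  · rintro j rfl
    rcases j with _ | _ | _ | m
    · simp
    · simp
    · simp; ring
    rw [preNormEDS'_even, preNormEDS'_even]
    rcases Nat.even_or_odd' m with ⟨i, rfl | rfl⟩
    · have p1 := od i (by omega)
      have p2 := ev (i + 1) (by omega)
      have p3 := od (i + 1) (by omega)
      have p4 := ev (i + 2) (by omega)
      have p5 := od (i + 2) (by omega)
      rw [show 2 * (i + 1) = 2 * i + 2 by ring] at p2 p3
      rw [show 2 * (i + 2) = 2 * i + 4 by ring] at p4 p5
      simp only [add_assoc, Nat.reduceAdd] at p1 p2 p3 p4 p5 ⊢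
      generalize preNormEDS' (t ^ 6 * B) (t ^ 4 * c) (t ^ 6 * d) = p at *
      generalize preNormEDS' B c d = q at *
      apply mul_left_cancel₀ (pow_ne_zero 2 ht)
      calc t ^ 2 * (t ^ 2 * (p (2 * i + 2) ^ 2 * p (2 * i + 3) * p (2 * i + 5) -
            p (2 * i + 1) * p (2 * i + 3) * p (2 * i + 4) ^ 2))
          = (t ^ 2 * p (2 * i + 2)) ^ 2 * p (2 * i + 3) * p (2 * i + 5) -
            p (2 * i + 1) * p (2 * i + 3) * (t ^ 2 * p (2 * i + 4)) ^ 2 := by ring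
        _ = _ := by rw [p1, p2, p3, p4, p5]; ring
    · have p1 := ev (i + 1) (by omega)
      have p2 := od (i + 1) (by omega)
      have p3 := ev (i + 2) (by omega)
      have p4 := od (i + 2) (by omega)
      have p5 := ev (i + 3) (by omega)
      rw [show 2 * (i + 1) = 2 * i + 2 by ring] at p1 p2
      rw [show 2 * (i + 2) = 2 * i + 4 by ring] at p3 p4
      rw [show 2 * (i + 3) = 2 * i + 6 by ring] at p5
      simp only [add_assoc, Nat.reduceAdd] at p1 p2 p3 p4 p5 ⊢
      generalize preNormEDS' (t ^ 6 * B) (t ^ 4 * c) (t ^ 6 * d) = p at *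
      generalize preNormEDS' B c d = q at *
      apply mul_left_cancel₀ (pow_ne_zero 2 ht)
      calc t ^ 2 * (t ^ 2 * (p (2 * i + 3) ^ 2 * p (2 * i + 4) * p (2 * i + 6) -
            p (2 * i + 2) * p (2 * i + 4) * p (2 * i + 5) ^ 2))
          = p (2 * i + 3) ^ 2 * (t ^ 2 * p (2 * i + 4)) * (t ^ 2 * p (2 * i + 6)) -
            (t ^ 2 * p (2 * i + 2)) * (t ^ 2 * p (2 * i + 4)) * p (2 * i + 5) ^ 2 := by ring
        _ = _ := by rw [p1, p2, p3, p4, p5]; ring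
  · rintro j rfl
    rcases j with _ | _ | m
    · simp
    · simp
    rw [preNormEDS'_odd, preNormEDS'_odd]
    rcases Nat.even_or_odd' m with ⟨i, rfl | rfl⟩
    · rw [if_pos (by simp), if_pos (by simp), if_pos (by simp), if_pos (by simp)]
      have p1 := od i (by omega)
      have p2 := ev (i + 1) (by omega)
      have p3 := od (i + 1) (by omega)
      have p4 := ev (i + 2) (by omega)
      rw [show 2 * (i + 1) = 2 * i + 2 by ring] at p2 p3
      rw [show 2 * (i + 2) = 2 * i + 4 by ring] at p4
      simp only [add_assoc, Nat.reduceAdd] at p1 p2 p3 p4 ⊢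
      generalize preNormEDS' (t ^ 6 * B) (t ^ 4 * c) (t ^ 6 * d) = p at *
      generalize preNormEDS' B c d = q at *
      apply mul_left_cancel₀ (pow_ne_zero 2 ht)
      calc t ^ 2 * (p (2 * i + 4) * p (2 * i + 2) ^ 3 * (t ^ 6 * B) -
            p (2 * i + 1) * p (2 * i + 3) ^ 3 * 1)
          = (t ^ 2 * p (2 * i + 4)) * (t ^ 2 * p (2 * i + 2)) ^ 3 * B -
            t ^ 2 * (p (2 * i + 1) * p (2 * i + 3) ^ 3) := by ring
        _ = _ := by rw [p1, p2, p3, p4]; ring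
    · rw [if_neg (by simp), if_neg (by simp), if_neg (by simp), if_neg (by simp)]
      have p1 := ev (i + 1) (by omega)
      have p2 := od (i + 1) (by omega)
      have p3 := ev (i + 2) (by omega)
      have p4 := od (i + 2) (by omega)
      rw [show 2 * (i + 1) = 2 * i + 2 by ring] at p1 p2
      rw [show 2 * (i + 2) = 2 * i + 4 by ring] at p3 p4
      simp only [add_assoc, Nat.reduceAdd] at p1 p2 p3 p4 ⊢
      generalize preNormEDS' (t ^ 6 * B) (t ^ 4 * c) (t ^ 6 * d) = p at *
      generalize preNormEDS' B c d = q at *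
      apply mul_left_cancel₀ (pow_ne_zero 2 ht)
      calc t ^ 2 * (p (2 * i + 5) * p (2 * i + 3) ^ 3 * 1 -
            p (2 * i + 2) * p (2 * i + 4) ^ 3 * (t ^ 6 * B))
          = t ^ 2 * (p (2 * i + 5) * p (2 * i + 3) ^ 3) -
            (t ^ 2 * p (2 * i + 2)) * (t ^ 2 * p (2 * i + 4)) ^ 3 * B := by ring
        _ = _ := by rw [p1, p2, p3, p4]; ring

lemma psiEN_odd (N : ℕ) (a b : ℤ) (j : ℕ) :
    psiEN N a b ((2 * j + 1 : ℕ) : ℤ) =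
      preNormEDS' (16 * (a ^ 3 - (N : ℤ) ^ 2 * a) ^ 2)
        (3 * a ^ 4 - 6 * (N : ℤ) ^ 2 * a ^ 2 - (N : ℤ) ^ 4)
        (2 * a ^ 6 - 10 * (N : ℤ) ^ 2 * a ^ 4 - 10 * (N : ℤ) ^ 4 * a ^ 2 + 2 * (N : ℤ) ^ 6)
        (2 * j + 1) := by
  unfold psiEN
  rw [WeierstrassCurve.Ψ_ofNat, if_neg (by simp), mul_one, Polynomial.evalEval_C,
    WeierstrassCurve.preΨ', ← Polynomial.coe_evalRingHom, map_preNormEDS']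
  congr 1
  · simp [WeierstrassCurve.Ψ₂Sq, congruentCurveZ, WeierstrassCurve.b₂, WeierstrassCurve.b₄,
      WeierstrassCurve.b₆]
    ring
  · simp [WeierstrassCurve.Ψ₃, congruentCurveZ, WeierstrassCurve.b₂, WeierstrassCurve.b₄,
      WeierstrassCurve.b₆, WeierstrassCurve.b₈]
    ring
  · simp [WeierstrassCurve.preΨ₄, congruentCurveZ, WeierstrassCurve.b₂, WeierstrassCurve.b₄,
      WeierstrassCurve.b₆, WeierstrassCurve.b₈]
    ring

lemma case_two (N : ℕ) (hsq : Squarefree N) (a b : ℤ) (f : b ^ 2 = a ^ 3 - (N : ℤ) ^ 2 * a)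
    (l : ℕ) (hl : l.Prime) (hl2 : l ≠ 2) (ha : (l : ℤ) ∣ a) (hN : l ∣ N) (j : ℕ) :
    ∃ u : ℤ, psiEN N a b ((2 * j + 1 : ℕ) : ℤ) = (l : ℤ) ^ (2 * j ^ 2 + 2 * j) * u ∧
      ¬ (l : ℤ) ∣ u := by
  have : Fact l.Prime := ⟨hl⟩
  have hlp : Prime (l : ℤ) := Nat.prime_iff_prime_int.mp hl
  have hl0 : (l : ℤ) ≠ 0 := hlp.ne_zero
  obtain ⟨a', rfl⟩ := ha
  obtain ⟨M, rfl⟩ := hN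
  have hM : ¬ l ∣ M := by
    intro h
    obtain ⟨k, rfl⟩ := h
    have := hsq l ⟨k, by ring⟩
    exact hl.one_lt.ne' (Nat.isUnit_iff.mp this)
  have hz : (l : ℤ) ∣ a' * (a' ^ 2 - (M : ℤ) ^ 2) := by
    have h1 : (l : ℤ) ^ 3 * (a' * (a' ^ 2 - (M : ℤ) ^ 2)) = b ^ 2 := by
      rw [f]; push_cast; ring
    have hb : (l : ℤ) ∣ b := hlp.dvd_of_dvd_pow (n := 2) ⟨_, by rw [← h1, pow_succ' _ 2, mul_assoc]⟩
    obtain ⟨b1, rfl⟩ := hb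
    have h2 : (l : ℤ) * (a' * (a' ^ 2 - (M : ℤ) ^ 2)) = b1 ^ 2 := by
      apply mul_left_cancel₀ (pow_ne_zero 2 hl0)
      linear_combination h1
    have hb1 : (l : ℤ) ∣ b1 := hlp.dvd_of_dvd_pow (n := 2) ⟨_, h2.symm⟩
    obtain ⟨b2, rfl⟩ := hb1
    refine ⟨b2 ^ 2, ?_⟩
    apply mul_left_cancel₀ hl0
    linear_combination h2
  refine ⟨preNormEDS' (16 * (a' ^ 3 - (M : ℤ) ^ 2 * a') ^ 2)
    (3 * a' ^ 4 - 6 * (M : ℤ) ^ 2 * a' ^ 2 - (M : ℤ) ^ 4)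
    (2 * a' ^ 6 - 10 * (M : ℤ) ^ 2 * a' ^ 4 - 10 * (M : ℤ) ^ 4 * a' ^ 2 + 2 * (M : ℤ) ^ 6)
    (2 * j + 1), ?_, ?_⟩
  · rw [psiEN_odd]
    have := (pre_scale hl0 (16 * (a' ^ 3 - (M : ℤ) ^ 2 * a') ^ 2)
      (3 * a' ^ 4 - 6 * (M : ℤ) ^ 2 * a' ^ 2 - (M : ℤ) ^ 4)
      (2 * a' ^ 6 - 10 * (M : ℤ) ^ 2 * a' ^ 4 - 10 * (M : ℤ) ^ 4 * a' ^ 2 + 2 * (M : ℤ) ^ 6)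
      (2 * j + 1)).2 j rfl
    rw [← this]
    congr 1
    · push_cast; ring
    · push_cast; ring
    · push_cast; ring
  · rw [← ZMod.intCast_zmod_eq_zero_iff_dvd] at hz
    rw [← ZMod.intCast_zmod_eq_zero_iff_dvd, ← eq_intCast (Int.castRingHom (ZMod l)), map_preNormEDS']
    have hB : (Int.castRingHom (ZMod l)) (16 * (a' ^ 3 - (M : ℤ) ^ 2 * a') ^ 2) = 0 := by
      push_cast at hz
      simp only [map_mul, map_pow, map_sub, map_natCast, map_ofNat, eq_intCast]
      linear_combination 16 * (a' : ZMod l) * ((a' : ZMod l) ^ 2 - (M : ZMod l) ^ 2) * hz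
    rw [hB]
    apply pre_ne_zero
    have h2 : (2 : ZMod l) ≠ 0 := by
      intro h
      have : ((2 : ℕ) : ZMod l) = 0 := by exact_mod_cast h
      rw [ZMod.natCast_eq_zero_iff] at this
      exact hl2 ((Nat.prime_dvd_prime_iff_eq hl Nat.prime_two).mp this)
    intro hc
    simp only [map_mul, map_pow, map_sub, map_natCast, map_ofNat, eq_intCast] at hc
    push_cast at hz
    refine base_sing h2 (b := 0) (a := (a' : ZMod l)) (N := (M : ZMod l)) ?_ ?_ hc rfl
    · linear_combination -hz
    · rintro ⟨-, h⟩
      rw [ZMod.natCast_eq_zero_iff] at h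
      exact hM h

lemma case_one (N : ℕ) (a b : ℤ) (h : (congruentCurve N).Nonsingular (a : ℚ) (b : ℚ))
    (f : b ^ 2 = a ^ 3 - (N : ℤ) ^ 2 * a)
    (hPtors : ∀ m : ℕ, 1 ≤ m →
      m • (WeierstrassCurve.Affine.Point.some _ _ h) ≠ 0)
    (n : ℕ) (hn : 3 ≤ n) (hnodd : Odd n)
    (z : ℤ) (hz : xc (n • (WeierstrassCurve.Affine.Point.some _ _ h)) = z)
    (l : ℕ) (hl : l.Prime) (hl2 : l ≠ 2) (hns : ¬ ((l : ℤ) ∣ a ∧ l ∣ N)) :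
    ¬ (l : ℤ) ∣ psiEN N a b n := by
  have : Fact l.Prime := ⟨hl⟩
  have h2 : (2 : ZMod l) ≠ 0 := by
    intro h
    have : ((2 : ℕ) : ZMod l) = 0 := by exact_mod_cast h
    rw [ZMod.natCast_eq_zero_iff] at this
    exact hl2 ((Nat.prime_dvd_prime_iff_eq hl Nat.prime_two).mp this)
  have fq : (b : ℚ) ^ 2 = (a : ℚ) ^ 3 - (N : ℚ) ^ 2 * a := by exact_mod_cast f
  have hb : (b : ℚ) ≠ 0 := by
    intro hb
    apply hPtors 2 (by norm_num)
    rw [two_nsmul]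
    apply WeierstrassCurve.Affine.Point.add_self_of_Y_eq
    simp [WeierstrassCurve.Affine.negY, congruentCurve, hb]
  set P := WeierstrassCurve.Affine.Point.some _ _ h with hP
  set x : ℕ → ℚ := fun m => xc (m • P) with hx
  have hx1 : x 1 = a := by simp [hx, hP, xc]
  have hx2 : x 2 * (4 * (b : ℚ) ^ 2) = ((a : ℚ) ^ 2 + (N : ℚ) ^ 2) ^ 2 := geo_dbl N a b h hb
  have hsub : ∀ m n : ℕ, n < m → m • P - n • P = (m - n) • P := fun m n hmn =>
    (sub_nsmul P hmn.le).symm ▸ (sub_eq_add_neg _ _)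
  have hne : ∀ m n, 1 ≤ n → n < m → x m ≠ x n := by
    intro m n h1 h2 he
    rcases geo_eq_iff N _ _ (hPtors m (by omega)) (hPtors n h1) he with h | h
    · rw [← add_nsmul] at h
      exact hPtors _ (by omega) h
    · rw [hsub m n h2] at h
      exact hPtors _ (by omega) h
  have hgeo := fun m n (h1 : 1 ≤ n) (h2 : n < m) =>
    geo_add N _ _ (hPtors m (by omega)) (hPtors n h1) (hne m n h1 h2)
  have hs : ∀ m n, 1 ≤ n → n < m → (x (m + n) + x (m - n)) * (x m - x n) ^ 2 =
      2 * (x m + x n) * (x m * x n - (N : ℚ) ^ 2) := by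
    intro m n h1 h2
    have := (hgeo m n h1 h2).1
    rwa [← add_nsmul, hsub m n h2] at this
  have hp : ∀ m n, 1 ≤ n → n < m → (x (m + n) * x (m - n)) * (x m - x n) ^ 2 =
      (x m * x n + (N : ℚ) ^ 2) ^ 2 := by
    intro m n h1 h2
    have := (hgeo m n h1 h2).2
    rwa [← add_nsmul, hsub m n h2] at this
  set c : ℤ := 3 * a ^ 4 - 6 * (N : ℤ) ^ 2 * a ^ 2 - (N : ℤ) ^ 4 with hc
  set d : ℤ := 2 * a ^ 6 - 10 * (N : ℤ) ^ 2 * a ^ 4 - 10 * (N : ℤ) ^ 4 * a ^ 2 + 2 * (N : ℤ) ^ 6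
    with hd
  set w : ℕ → ℤ := fun k => normEDS (2 * b) c d k with hw
  have hv : ∀ k, vseq (a : ℚ) b x k = (w k : ℚ) := by
    intro k
    rw [vseq_eq fq hb hx1 hx2 hne hs hp (c : ℚ) (d : ℚ) (by rw [hc]; push_cast; ring)
      (by rw [hd]; push_cast; ring) k, hw]
    have := map_normEDS (2 * b) c d (f := Int.castRingHom ℚ) k
    simpa using this.symm
  have E : ∀ m n, 1 ≤ n → n < m → w (m + n) * w (m - n) =
      w (m + 1) * w (m - 1) * w n ^ 2 - w (n + 1) * w (n - 1) * w m ^ 2 := by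
    intro m n h1 h2
    have := vseq_rel fq hb hx1 hx2 hne hs hp m n h1 h2
    simp only [hv] at this
    exact_mod_cast this
  have E1 : w (n + 1) * w (n - 1) = w n ^ 2 * (a - z) := by
    have := vseq_E1 hb hx1 hne n (by omega)
    simp only [hv] at this
    rw [show x n = z from hz] at this
    exact_mod_cast this
  have hpsi : psiEN N a b n = w n := by
    obtain ⟨j, rfl⟩ := hnodd
    rw [psiEN_odd, hw]
    simp only
    rw [normEDS_ofNat, if_neg (by simp), mul_one]
    congr 1
    rw [← f]; ring
  have w3 : w 3 = c := normEDS_three ..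
  have w4 : w 4 = d * (2 * b) := normEDS_four ..
  rw [hpsi]
  intro hdvd
  have key := no_consec (K := ZMod l) h2 (a := (a : ZMod l)) (b := (b : ZMod l))
    (N := (N : ZMod l)) (by exact_mod_cast congrArg (Int.cast : ℤ → ZMod l) f)
    (by
      rintro ⟨h1, h2⟩
      rw [ZMod.intCast_zmod_eq_zero_iff_dvd] at h1
      rw [ZMod.natCast_eq_zero_iff] at h2
      exact hns ⟨h1, h2⟩) (fun k => (w k : ZMod l))
    (by simp [hw]) (by simp [hw]) (by beta_reduce; rw [w3, hc]; push_cast; ring) (by beta_reduce; rw [w4, hd]; push_cast; ring)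
    (by
      intro m n h1 h2
      exact_mod_cast congrArg (Int.cast : ℤ → ZMod l) (E m n h1 h2))
  have hlp : Prime (l : ℤ) := Nat.prime_iff_prime_int.mp hl
  have : (l : ℤ) ∣ w (n + 1) * w (n - 1) := by
    rw [E1]
    exact Dvd.dvd.mul_right (dvd_pow hdvd (by norm_num)) _
  rcases hlp.dvd_or_dvd this with h | h
  · exact key n (by omega) ((ZMod.intCast_zmod_eq_zero_iff_dvd _ _).mpr hdvd)
      ((ZMod.intCast_zmod_eq_zero_iff_dvd _ _).mpr h)
  · refine key (n - 1) (by omega) ((ZMod.intCast_zmod_eq_zero_iff_dvd _ _).mpr h) ?_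
    rw [show n - 1 + 1 = n by omega]
    exact (ZMod.intCast_zmod_eq_zero_iff_dvd _ _).mpr hdvd

theorem stmt7 (N : ℕ) (hN : 0 < N) (hsq : Squarefree N)
    (a b : ℤ) (h : (congruentCurve N).Nonsingular (a : ℚ) (b : ℚ))
    (hPtors : ∀ m : ℤ, 1 ≤ m →
      m • (WeierstrassCurve.Affine.Point.some _ _ h) ≠ 0)
    (n : ℤ) (hn : 3 ≤ n) (hnodd : Odd n)
    (hint : IsIntegralPoint (n • (WeierstrassCurve.Affine.Point.some _ _ h)))
    (l : ℕ) (hl : l.Prime) (hl2n : ¬ ((l : ℤ) ∣ 2 * n)) :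
    (padicValInt l (psiEN N a b n) : ℤ) =
      ((n ^ 2 - 1) / 2) * (padicValNat l (Int.gcd a (N : ℤ)) : ℤ) := by
  have e := h.1
  rw [WeierstrassCurve.Affine.equation_iff] at e
  simp only [congruentCurve] at e
  have f : b ^ 2 = a ^ 3 - (N : ℤ) ^ 2 * a := by
    have : (b : ℚ) ^ 2 = (a : ℚ) ^ 3 - (N : ℚ) ^ 2 * a := by linarith
    exact_mod_cast this
  have : Fact l.Prime := ⟨hl⟩
  have hl2 : l ≠ 2 := by
    rintro rfl
    exact hl2n (dvd_mul_right _ _)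
  obtain ⟨n, rfl⟩ := Int.eq_ofNat_of_zero_le (show 0 ≤ n by omega)
  have hnodd' : Odd n := by exact_mod_cast hnodd
  by_cases hc : (l : ℤ) ∣ a ∧ l ∣ N
  · obtain ⟨j, rfl⟩ := hnodd'
    obtain ⟨u, hu, hlu⟩ := case_two N hsq a b f l hl hl2 hc.1 hc.2 j
    have hg : padicValNat l (Int.gcd a (N : ℤ)) = 1 := by
      have h1 : l ∣ Int.gcd a (N : ℤ) := by
        have := Int.dvd_coe_gcd hc.1 (Int.natCast_dvd_natCast.mpr hc.2)
        exact_mod_cast this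
      have h2 : Int.gcd a (N : ℤ) ∣ N := by
        exact_mod_cast Int.gcd_dvd_right a (N : ℤ)
      have h3 : Squarefree (Int.gcd a (N : ℤ)) := hsq.squarefree_of_dvd h2
      rw [← Nat.factorization_def _ hl]
      apply le_antisymm (h3.natFactorization_le_one l)
      exact (hl.dvd_iff_one_le_factorization h3.ne_zero).mp h1
    have hu0 : u ≠ 0 := by rintro rfl; simp at hlu
    have hl0 : (l : ℤ) ≠ 0 := by exact_mod_cast hl.ne_zero
    have hv : padicValInt l (psiEN N a b ((2 * j + 1 : ℕ) : ℤ)) = 2 * j ^ 2 + 2 * j := by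
      rw [hu, padicValInt.mul (pow_ne_zero _ hl0) hu0, padicValInt.eq_zero_of_not_dvd hlu]
      rw [padicValInt, Int.natAbs_pow, Int.natAbs_natCast, padicValNat.prime_pow, add_zero]
    rw [hg, hv]
    have : ((2 * j + 1 : ℕ) : ℤ) ^ 2 - 1 = 2 * (2 * j ^ 2 + 2 * j) := by push_cast; ring
    rw [this, Int.mul_ediv_cancel_left _ (by norm_num)]
    push_cast; ring
  · obtain ⟨x, y, hxy, hP, hden⟩ := hint
    have hno := case_one N a b h f
      (fun m hm => by
        have := hPtors (m : ℤ) (by exact_mod_cast hm)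
        rwa [natCast_zsmul] at this)
      n (by omega) hnodd' x.num
      (by
        rw [natCast_zsmul] at hP
        rw [hP]
        simp only [xc]
        exact (Rat.den_eq_one_iff x).mp hden |>.symm)
      l hl hl2 hc
    have hg : padicValNat l (Int.gcd a (N : ℤ)) = 0 := by
      apply padicValNat.eq_zero_of_not_dvd
      intro hd
      apply hc
      constructor
      · exact (Int.natCast_dvd_natCast.mpr hd).trans (Int.gcd_dvd_left a (N : ℤ))
      · exact Int.natCast_dvd_natCast.mp
          ((Int.natCast_dvd_natCast.mpr hd).trans (Int.gcd_dvd_right a (N : ℤ)))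
    rw [hg, padicValInt.eq_zero_of_not_dvd hno]
    simp
end

section
/- Let N be a positive squarefree integer, let P = (a, b) be a non-torsion integral point of E_N(ℚ), and let n ≥ 3 be an odd integer such that nP is integral. Then a < n²·N (and hence, since every real point of E_N has x-coordinate greater than −N, one has |a| < n²·N). -/
theorem cn_conv {p x y : ℤ} (h : p ∣ x) (e : x = y) : p ∣ y := e ▸ h

theorem cn_mod4 (a N : ℤ) (h : ¬ (2:ℤ) ∣ N) : ¬ (4:ℤ) ∣ a^2 + N^2 := by
  have h1 : N % 2 = 1 := by omega
  rw [← Int.odd_iff] at h1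
  obtain ⟨M, rfl⟩ := h1
  rcases Int.even_or_odd' a with ⟨c, rfl | rfl⟩
  · rw [show (2*c)^2 + (2*M+1)^2 = 4*(c^2 + M^2+M) + 1 by ring]; omega
  · rw [show (2*c+1)^2 + (2*M+1)^2 = 4*(c^2 + c + M^2+M) + 2 by ring]; omega

theorem cn_g_exists (a N : ℤ) (X Z X1 Z1 X2 Z2 : ℤ)
    (h1 : IsCoprime X1 Z1) (h2 : IsCoprime X2 Z2)
    (hne : X - a * Z ≠ 0)
    (hA : (X - a*Z)^2 * (X1*X2) = (a*X+N^2*Z)^2 * (Z1*Z2))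
    (hM : (X - a*Z)^2 * (X1*Z2+X2*Z1) = 2*(a*X-N^2*Z)*(X+a*Z) * (Z1*Z2)) :
    ∃ g : ℤ, (X - a*Z)^2 = g * (Z1*Z2) ∧ g ∣ 2*(a*X-N^2*Z)*(X+a*Z) ∧ g ∣ (a*X+N^2*Z)^2 := by
  obtain ⟨p, q, hpq⟩ := h1
  obtain ⟨r, s, hrs⟩ := h2
  obtain ⟨al, be, ga, hb⟩ : ∃ al be ga : ℤ,
      al * (Z1*Z2) + be * (X1*Z2+X2*Z1) + ga * (X1*X2) = 1 := by
    refine ⟨q*s*(1+(p*s-q*r)*(X1*Z2)), q*r*(1+(p*s-q*r)*(X1*Z2)) + (p*s-q*r)^2*(X1*Z2),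
      p*r*(1+(p*s-q*r)*(X1*Z2)) - (p*s-q*r)^2*(Z1*Z2), ?_⟩
    have h : p*r*(X1*X2) + q*s*(Z1*Z2) + q*r*(X1*Z2+X2*Z1) + (p*s-q*r)*(X1*Z2) = 1 := by
      linear_combination (r*X2+s*Z2) * hpq + hrs
    linear_combination (1 + (p*s-q*r)*(X1*Z2)) * h
  set F0 := (X - a*Z)^2 with hF0
  set F1 := 2*(a*X-N^2*Z)*(X+a*Z) with hF1
  set F2 := (a*X+N^2*Z)^2 with hF2
  have hF0ne : F0 ≠ 0 := pow_ne_zero 2 hne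
  have hAM : F1 * (X1*X2) = F2 * (X1*Z2+X2*Z1) := by
    apply mul_left_cancel₀ hF0ne
    linear_combination F1 * hA - F2 * hM
  refine ⟨al*F0+be*F1+ga*F2, ?_, ⟨X1*Z2+X2*Z1, ?_⟩, ⟨X1*X2, ?_⟩⟩
  · linear_combination (-F0) * hb + be * hM + ga * hA
  · linear_combination (-F1) * hb - al * hM + ga * hAM
  · linear_combination (-F2) * hb - al * hA - be * hAM

theorem cn_g_odd (a N X Z g p : ℤ) (hXZ : IsCoprime X Z) (hp : Prime p) (hp2 : ¬ p ∣ 2)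
    (h0 : g ∣ (X - a*Z)^2) (h1 : g ∣ 2*(a*X-N^2*Z)*(X+a*Z)) (h2 : g ∣ (a*X+N^2*Z)^2)
    (hpg : p ∣ g) : p ∣ a ∧ p ∣ N ∧ p ∣ X := by
  have hu : p ∣ X - a*Z := hp.dvd_of_dvd_pow (hpg.trans h0)
  have hw : p ∣ a*X+N^2*Z := hp.dvd_of_dvd_pow (hpg.trans h2)
  have hZ : ¬ p ∣ Z := fun hZ => by
    have : p ∣ X := by have := dvd_add hu (hZ.mul_left a); simpa using this
    exact hp.not_isUnit (hXZ.isUnit_of_dvd' this hZ)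
  have hs : p ∣ a^2+N^2 := by
    have : p ∣ (a^2+N^2)*Z := by
      have := dvd_sub hw (hu.mul_left a)
      exact cn_conv this (by ring)
    exact (hp.dvd_or_dvd this).resolve_right hZ
  have hF : p ∣ 2*(a^2-N^2)*(2*a)*(Z*Z) := by
    have e : 2*(a^2-N^2)*(2*a)*(Z*Z) = 2*(a*X-N^2*Z)*(X+a*Z)
      - (X-a*Z) * (2*(a*(X+a*Z) + (a^2-N^2)*Z)) := by ring
    rw [e]
    exact dvd_sub (hpg.trans h1) (hu.mul_right _)
  have hpa : p ∣ a := by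
    rcases hp.dvd_or_dvd hF with h | h
    · rcases hp.dvd_or_dvd h with h | h
      · have h := (hp.dvd_or_dvd h).resolve_left hp2
        have : p ∣ 2 * a^2 := by have := dvd_add hs h; exact cn_conv this (by ring)
        exact hp.dvd_of_dvd_pow ((hp.dvd_or_dvd this).resolve_left hp2)
      · exact (hp.dvd_or_dvd h).resolve_left hp2
    · rcases hp.dvd_or_dvd h with h | h <;> exact absurd h hZ
  refine ⟨hpa, ?_, ?_⟩
  · have : p ∣ N^2 := by
      have := dvd_sub hs (hpa.mul_left a)
      exact cn_conv this (by ring)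
    exact hp.dvd_of_dvd_pow this
  · have := dvd_add hu (hpa.mul_right Z); simpa using this

theorem cn_sq5 (p u : ℤ) (hp : Prime p) (h : p^5 ∣ u^2) : p^3 ∣ u := by
  have h1 : p ∣ u := hp.dvd_of_dvd_pow ((dvd_pow_self p (by norm_num)).trans h)
  obtain ⟨u, rfl⟩ := h1
  have h2 : p^3 ∣ u^2 := by
    have : p^2 * p^3 ∣ p^2 * u^2 := by convert h using 1 <;> ring
    exact (mul_dvd_mul_iff_left (pow_ne_zero 2 hp.ne_zero)).1 this
  have h1 : p ∣ u := hp.dvd_of_dvd_pow ((dvd_pow_self p (by norm_num)).trans h2)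
  obtain ⟨u, rfl⟩ := h1
  have h3 : p ∣ u^2 := by
    have : p^2 * p ∣ p^2 * u^2 := by convert h2 using 1 <;> ring
    exact (mul_dvd_mul_iff_left (pow_ne_zero 2 hp.ne_zero)).1 this
  obtain ⟨u, rfl⟩ := hp.dvd_of_dvd_pow h3
  exact ⟨u, by ring⟩

theorem cn_g_odd5 (a N X Z g p : ℤ) (hXZ : IsCoprime X Z) (hp : Prime p) (hp2 : ¬ p ∣ 2)
    (hN : ¬ p^2 ∣ N)
    (h0 : g ∣ (X - a*Z)^2) (h1 : g ∣ 2*(a*X-N^2*Z)*(X+a*Z)) (h2 : g ∣ (a*X+N^2*Z)^2) :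
    ¬ p^5 ∣ g := by
  intro hpg
  have hp0 := hp.ne_zero
  obtain ⟨ha, hN', hX⟩ := cn_g_odd a N X Z g p hXZ hp hp2 h0 h1 h2
    ((dvd_pow_self p (by norm_num)).trans hpg)
  have hZ : ¬ p ∣ Z := fun hZ => hp.not_isUnit (hXZ.isUnit_of_dvd' hX hZ)
  obtain ⟨u, hu⟩ := cn_sq5 p _ hp (hpg.trans h0)
  obtain ⟨w, hw⟩ := cn_sq5 p _ hp (hpg.trans h2)
  obtain ⟨a, rfl⟩ := ha
  obtain ⟨N, rfl⟩ := hN'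
  have hN1 : ¬ p ∣ N := fun h => hN (by rw [pow_two]; exact mul_dvd_mul_left p h)
  have hs : p ∣ a^2+N^2 := by
    have : p ∣ (a^2+N^2)*Z := by
      refine ⟨w - p*a*u, ?_⟩
      apply mul_left_cancel₀ (pow_ne_zero 2 hp0)
      linear_combination hw - p * a * hu
    exact (hp.dvd_or_dvd this).resolve_right hZ
  have hF : p ∣ 2*(p^2*a*u+(a^2-N^2)*Z)*(p^2*u+2*a*Z) := by
    have h := hpg.trans h1
    have : p^3 * p ∣ p^3 * (2*(p^2*a*u+(a^2-N^2)*Z)*(p^2*u+2*a*Z)) := by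
      have e : p^3 * (2*(p^2*a*u+(a^2-N^2)*Z)*(p^2*u+2*a*Z)) =
        2 * (p * a * X - (p * N) ^ 2 * Z) * (X + p * a * Z) := by
        have hX : X = p^3*u + p*a*Z := by linear_combination hu
        rw [hX]; ring
      rw [e]
      exact (Dvd.intro p (by ring)).trans h
    exact (mul_dvd_mul_iff_left (pow_ne_zero 3 hp0)).1 this
  have hfin : p ∣ a → False := fun hpa => by
    have : p ∣ N^2 := by
      have := dvd_sub hs (hpa.mul_left a)
      exact cn_conv this (by ring)
    exact hN1 (hp.dvd_of_dvd_pow this)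
  rcases hp.dvd_or_dvd hF with h | h
  · have h := (hp.dvd_or_dvd h).resolve_left hp2
    have h : p ∣ (a^2-N^2)*Z := by
      have := dvd_sub h (Dvd.intro (p*a*u) rfl : p ∣ p*(p*a*u))
      exact cn_conv this (by ring)
    have h := (hp.dvd_or_dvd h).resolve_right hZ
    have : p ∣ 2 * a^2 := by have := dvd_add hs h; exact cn_conv this (by ring)
    exact hfin (hp.dvd_of_dvd_pow ((hp.dvd_or_dvd this).resolve_left hp2))
  · have h : p ∣ 2 * (a*Z) := by
      have := dvd_sub h (Dvd.intro (p*u) rfl : p ∣ p*(p*u))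
      exact cn_conv this (by ring)
    have h := (hp.dvd_or_dvd h).resolve_left hp2
    exact hfin ((hp.dvd_or_dvd h).resolve_right hZ)

theorem cn_g_two (a N X Z g : ℤ) (hXZ : IsCoprime X Z)
    (h0 : g ∣ (X - a*Z)^2) (h2 : g ∣ (a*X+N^2*Z)^2) (m : ℕ) (hm : 0 < m) 
    (hg : (2:ℤ)^(2*m-1) ∣ g) : (2:ℤ)^m ∣ a^2+N^2 ∧ ¬ 2 ∣ Z ∧ (2:ℤ) ∣ X - a*Z := by
  have key : ∀ u : ℤ, (2:ℤ)^(2*m-1) ∣ u^2 → (2:ℤ)^m ∣ u := by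
    intro u hu
    by_cases hu0 : u = 0
    · simp [hu0]
    have hf : FiniteMultiplicity (2:ℤ) u := Int.finiteMultiplicity_iff.2 ⟨by norm_num, hu0⟩
    have hf2 : FiniteMultiplicity (2:ℤ) (u^2) :=
      Int.finiteMultiplicity_iff.2 ⟨by norm_num, pow_ne_zero 2 hu0⟩
    rw [hf.pow_dvd_iff_le_multiplicity]
    rw [hf2.pow_dvd_iff_le_multiplicity, hf.multiplicity_pow Int.prime_two] at hu
    omega
  have hu := key _ (hg.trans h0)
  have hw := key _ (hg.trans h2)
  have hu2 : (2:ℤ) ∣ X - a*Z := (dvd_pow_self 2 hm.ne').trans hu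
  have hZ : ¬ (2:ℤ) ∣ Z := fun hZ => by
    have : (2:ℤ) ∣ X := by have := dvd_add hu2 (hZ.mul_left a); simpa using this
    exact Int.prime_two.not_isUnit (hXZ.isUnit_of_dvd' this hZ)
  refine ⟨?_, hZ, hu2⟩
  have h : (2:ℤ)^m ∣ (a^2+N^2)*Z := by
    have := dvd_sub hw (hu.mul_left a)
    exact cn_conv this (by ring)
  have hc : IsCoprime ((2:ℤ)^m) Z := by
    apply IsCoprime.pow_left
    exact (Int.prime_two.coprime_iff_not_dvd).2 hZ
  exact hc.dvd_of_dvd_mul_right h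

theorem cn_g_dvd (a N X Z : ℤ) (g : ℕ) (hsq : Squarefree N) (hXZ : IsCoprime X Z)
    (h0 : (g:ℤ) ∣ (X - a*Z)^2) (h1 : (g:ℤ) ∣ 2*(a*X-N^2*Z)*(X+a*Z)) (h2 : (g:ℤ) ∣ (a*X+N^2*Z)^2) :
    g ∣ 4 * (Int.gcd a N)^4 := by
  rw [Nat.dvd_iff_prime_pow_dvd_dvd]
  intro p k hp hk
  have hpZ : Prime (p:ℤ) := Nat.prime_iff_prime_int.1 hp
  have hkZ : (p:ℤ)^k ∣ g := by exact_mod_cast hk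
  rcases Nat.eq_zero_or_pos k with rfl | hkpos
  · simp
  have hsqp : ¬ (p:ℤ)^2 ∣ N := fun h => hpZ.not_isUnit (hsq _ (by rwa [← pow_two]))
  by_cases hp2 : p = 2
  · subst hp2
    push_cast at hkZ
    by_cases hNe : (2:ℤ) ∣ N
    · by_cases hae : (2:ℤ) ∣ a
      · have hd : 2 ∣ Int.gcd a N := by
          have := Int.dvd_coe_gcd hae hNe; exact_mod_cast this
        have hk6 : k ≤ 6 := by
          by_contra hlt
          obtain ⟨h, -, -⟩ := cn_g_two a N X Z g hXZ h0 h2 4 (by norm_num)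
            ((pow_dvd_pow 2 (by omega)).trans hkZ)
          obtain ⟨a, rfl⟩ := hae
          obtain ⟨N, rfl⟩ := hNe
          have hNo : ¬ (2:ℤ) ∣ N := fun h => hsqp (by rw [pow_two]; push_cast; exact mul_dvd_mul_left 2 h)
          have h4 : (4:ℤ) ∣ a^2+N^2 := by
            obtain ⟨c, hc⟩ := h
            exact ⟨c, by linarith⟩
          exact cn_mod4 a N hNo h4
        calc 2^k ∣ 2^6 := pow_dvd_pow 2 hk6
          _ = 4 * 2^4 := by norm_num
          _ ∣ _ := mul_dvd_mul_left 4 (pow_dvd_pow_of_dvd hd 4)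
      · exfalso
        obtain ⟨h, -, -⟩ := cn_g_two a N X Z g hXZ h0 h2 1 (by norm_num)
            ((pow_dvd_pow 2 (by omega)).trans hkZ)
        have : (2:ℤ) ∣ a^2 := by
          rw [pow_one] at h
          exact (dvd_add_left (hNe.pow (by norm_num))).1 h
        exact hae (Int.prime_two.dvd_of_dvd_pow this)
    · have hk2 : k ≤ 2 := by
        by_contra hlt
        obtain ⟨h, -, -⟩ := cn_g_two a N X Z g hXZ h0 h2 2 (by norm_num)
            ((pow_dvd_pow 2 (by omega)).trans hkZ)
        exact cn_mod4 a N hNe (by simpa using h)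
      exact ((pow_dvd_pow 2 hk2).trans (by norm_num : 2^2 ∣ 4)).mul_right _
  · have hp2' : ¬ (p:ℤ) ∣ 2 := fun h => by
      have : p ∣ 2 := by exact_mod_cast h
      exact hp2 ((Nat.prime_dvd_prime_iff_eq hp Nat.prime_two).1 this)
    obtain ⟨ha, hN, -⟩ := cn_g_odd a N X Z g p hXZ hpZ hp2' h0 h1 h2
      ((dvd_pow_self _ hkpos.ne').trans hkZ)
    have hd : p ∣ Int.gcd a N := by
      have := Int.dvd_coe_gcd ha hN; exact_mod_cast this
    have hk4 : k ≤ 4 := by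
      by_contra hlt
      exact cn_g_odd5 a N X Z g p hXZ hpZ hp2' hsqp h0 h1 h2
        ((pow_dvd_pow _ (by omega)).trans hkZ)
    exact ((pow_dvd_pow p hk4).trans (pow_dvd_pow_of_dvd hd 4)).mul_left _

theorem cn_g_even (a N : ℤ) (x : ℚ) (g : ℕ) (hsq : Squarefree N)
    (h0 : (g:ℤ) ∣ (x.num - a*x.den)^2) (h : g ∣ 4 * (Int.gcd a N)^4)
    (hx : ∃ s : ℚ, x = s^2) (hx' : ∃ t : ℚ, x - N = t^2) : g ∣ 4 := by
  refine Nat.Coprime.dvd_of_dvd_mul_right ?_ h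
  apply Nat.Coprime.pow_right
  apply Nat.coprime_of_dvd
  intro p hp hpg hpd
  have hpZ : Prime (p:ℤ) := Nat.prime_iff_prime_int.1 hp
  have hpd' : (p:ℤ) ∣ (Int.gcd a N : ℕ) := by exact_mod_cast hpd
  have ha : (p:ℤ) ∣ a := hpd'.trans (Int.gcd_dvd_left ..)
  have hN : (p:ℤ) ∣ N := hpd'.trans (Int.gcd_dvd_right ..)
  have hsqp : ¬ (p:ℤ)^2 ∣ N := fun h => hpZ.not_isUnit (hsq _ (by rwa [← pow_two]))
  have hX : (p:ℤ) ∣ x.num := by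
    have : (p:ℤ) ∣ (x.num - a*x.den)^2 := (by exact_mod_cast hpg : (p:ℤ) ∣ g).trans h0
    have := dvd_add (hpZ.dvd_of_dvd_pow this) (ha.mul_right (x.den:ℤ))
    simpa using this
  obtain ⟨s, rfl⟩ := hx
  obtain ⟨t, ht⟩ := hx'
  rw [Rat.num_pow] at hX
  have hs : (p:ℤ) ∣ s.num := hpZ.dvd_of_dvd_pow hX
  have hsd : ¬ (p:ℤ) ∣ s.den := fun hd =>
    hpZ.not_isUnit ((Rat.isCoprime_num_den s).isUnit_of_dvd' hs hd)
  -- (s.num² - N s.den²) t.den² = t.num² s.den²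
  have e : (s.num^2 - N * s.den^2) * (t.den:ℤ)^2 = t.num^2 * (s.den:ℤ)^2 := by
    have hs' := Rat.num_div_den s
    have ht' := Rat.num_div_den t
    have hsd0 : (s.den:ℚ) ≠ 0 := by exact_mod_cast s.den_ne_zero
    have htd0 : (t.den:ℚ) ≠ 0 := by exact_mod_cast t.den_ne_zero
    rw [← hs', ← ht'] at ht
    field_simp at ht
    exact_mod_cast (by linear_combination ht : ((s.num:ℚ)^2 - N * s.den^2) * (t.den:ℚ)^2 = t.num^2 * (s.den:ℚ)^2)
  obtain ⟨S, hS⟩ := hs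
  obtain ⟨N, rfl⟩ := hN
  have hN1 : ¬ (p:ℤ) ∣ N := fun h => hsqp (by rw [pow_two]; exact mul_dvd_mul_left _ h)
  rw [hS] at e
  have h1 : (p:ℤ) ∣ t.num := by
    have : (p:ℤ) ∣ t.num^2 * (s.den:ℤ)^2 := by
      rw [← e]; exact ⟨(p*S^2 - N*s.den^2)*t.den^2, by ring⟩
    rcases hpZ.dvd_or_dvd this with h | h
    · exact hpZ.dvd_of_dvd_pow h
    · exact absurd (hpZ.dvd_of_dvd_pow h) hsd
  have htd : ¬ (p:ℤ) ∣ t.den := fun hd =>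
    hpZ.not_isUnit ((Rat.isCoprime_num_den t).isUnit_of_dvd' h1 hd)
  obtain ⟨T, hT⟩ := h1
  rw [hT] at e
  have h3 : (p:ℤ) ∣ N * ((s.den:ℤ)^2 * (t.den:ℤ)^2) := by
    refine ⟨S^2*t.den^2 - T^2*s.den^2, ?_⟩
    apply mul_left_cancel₀ hpZ.ne_zero
    linear_combination -e
  rcases hpZ.dvd_or_dvd h3 with h | h
  · exact hN1 h
  · rcases hpZ.dvd_or_dvd h with h | h
    · exact hsd (hpZ.dvd_of_dvd_pow h)
    · exact htd (hpZ.dvd_of_dvd_pow h)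

theorem cn_sum_bound (k : ℕ) :
    3 * ∑ j ∈ Finset.range k, (((j:ℚ)+1)^4 + ((j:ℚ)+1)^2) ≤ k * ((k:ℚ)+1)^4 := by
  induction k with
  | zero => simp
  | succ k ih =>
    rw [Finset.sum_range_succ]
    push_cast
    have hk : (0:ℚ) ≤ k := Nat.cast_nonneg k
    have : 0 ≤ (k:ℚ)^2 ∧ 0 ≤ (k:ℚ)^3 ∧ 0 ≤ (k:ℚ)^4 := ⟨by positivity, by positivity, by positivity⟩
    nlinarith [this.1, this.2.1, this.2.2]

/-- one step estimates -/
theorem cn_frac (t : ℚ) (ht : 0 ≤ t) : (1 - t) / (1+t)^2 ≤ 1 ∧ 1 - 3*t ≤ (1-t)/(1+t)^2 := by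
  have h : 0 < (1+t)^2 := by positivity
  constructor
  · rw [div_le_one h]; nlinarith
  · rw [le_div_iff₀ h]; nlinarith [pow_nonneg ht 2, pow_nonneg ht 3]

theorem cn_real (a N : ℚ) (n : ℕ) (hN : 0 < N) (hn : 3 ≤ n) (ha : (n:ℚ)^2 * N ≤ a)
    (x : ℕ → ℚ) (hx1 : x 1 = a)
    (hx2 : x 2 * (4 * a * (a^2-N^2)) = (a^2+N^2)^2)
    (hP : ∀ k, 2 ≤ k → (x k - a)^2 * (x (k+1) * x (k-1)) = (a * x k + N^2)^2)
    (hS : ∀ k, 2 ≤ k → (x k - a)^2 * (x (k+1) + x (k-1)) = 2 * (a * x k - N^2) * (x k + a)) :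
    ∀ k, 2 ≤ k → k ≤ n → 0 < x k ∧ x k ≤ a / 2 := by
  have hn3 : (3:ℚ) ≤ n := by exact_mod_cast hn
  have hn0 : (0:ℚ) < n := by linarith
  have ha0 : 0 < a := lt_of_lt_of_le (by positivity) ha
  have hn9 : (9:ℚ) ≤ (n:ℚ)^2 := by nlinarith
  have hna : N < a := by nlinarith
  set v : ℚ := 1 / a with hv
  have hv0 : 0 < v := by positivity
  have hva : v * a = 1 := by rw [hv]; field_simp
  have hNv : N * v ≤ 1 / n^2 := by
    rw [le_div_iff₀ (by positivity)]
    calc N * v * n^2 = (n^2 * N) * v := by ring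
      _ ≤ a * v := by gcongr
      _ = 1 := by rw [mul_comm, hva]
  set w : ℕ → ℚ := fun k => 1 / x k with hw
  set L : ℕ → ℚ := fun k => v + 2*v*(k - 3 * (∑ j ∈ Finset.range k, (((j:ℚ)+1)^4 + ((j:ℚ)+1)^2)) / n^4) with hL
  have hLv : ∀ k : ℕ, k + 1 ≤ n → v ≤ L k := by
    intro k hk
    have h1 := cn_sum_bound k
    have h2 : 3 * (∑ j ∈ Finset.range k, (((j:ℚ)+1)^4 + ((j:ℚ)+1)^2)) / (n:ℚ)^4 ≤ (k:ℚ) := by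
      rw [div_le_iff₀ (by positivity)]
      refine h1.trans ?_
      have : (k:ℚ) + 1 ≤ n := by exact_mod_cast hk
      gcongr
    have : 0 ≤ 2*v*(k - 3 * (∑ j ∈ Finset.range k, (((j:ℚ)+1)^4 + ((j:ℚ)+1)^2)) / n^4) := by
      apply mul_nonneg (by positivity); linarith
    change v ≤ v + _
    linarith
  have main : ∀ k, 1 ≤ k → k + 1 ≤ n →
      0 < w k ∧ w k ≤ k^2 * v ∧ L k ≤ w (k+1) - w k ∧ w (k+1) - w k ≤ (2*k+1)*v := by
    intro k hk
    induction k, hk using Nat.le_induction with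
    | base =>
      intro _
      have hw1 : w 1 = v := by simp only [hw, hx1, hv]
      have ht0 : 0 ≤ (N*v)^2 := by positivity
      have ht : (N*v)^2 ≤ 1/n^4 := by
        calc (N*v)^2 ≤ (1/(n:ℚ)^2)^2 := by gcongr
          _ = _ := by rw [div_pow, ← pow_mul]; norm_num
      have hw2 : w 2 = 4*v*((1-(N*v)^2)/(1+(N*v)^2)^2) := by
        have hpos : 0 < a^2-N^2 := by nlinarith
        have hx2' : x 2 = (a^2+N^2)^2 / (4 * a * (a^2-N^2)) := by
          rw [eq_div_iff (by positivity)]; exact hx2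
        simp only [hw, hx2', hv]
        have : a^2+N^2 ≠ 0 := by positivity
        field_simp
      obtain ⟨f1, f2⟩ := cn_frac _ ht0
      refine ⟨by rw [hw1]; exact hv0, by rw [hw1]; simp, ?_, ?_⟩
      · rw [show 1 + 1 = 2 from rfl, hw1, hw2]
        simp only [hL]
        have : 4*v*(1 - 3*(1/n^4)) ≤ 4*v*((1-(N*v)^2)/(1+(N*v)^2)^2) := by
          gcongr
          linarith
        simp only [Finset.sum_range_one, Nat.cast_zero, Nat.cast_one]
        have e : v + 2*v*(1 - 3 * ((0+1)^4 + (0+1)^2) / (n:ℚ)^4) = 4*v*(1 - 3*(1/n^4)) - v := by ring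
        rw [e]; linarith
      · rw [show 1 + 1 = 2 from rfl, hw1, hw2]
        have : 4*v*((1-(N*v)^2)/(1+(N*v)^2)^2) ≤ 4*v*1 := by gcongr
        push_cast; linarith
    | succ k hk ih =>
      intro hkn
      obtain ⟨i1, i2, i3, i4⟩ := ih (by omega)
      have hl := hLv k (by omega)
      have hwpos : 0 < w (k+1) := by linarith
      have hwle : w (k+1) ≤ ((k+1:ℕ):ℚ)^2 * v := by push_cast; linarith
      -- recursion
      have hxk : x k ≠ 0 := by rintro h; simp [hw, h] at i1
      have hxk1 : x (k+1) ≠ 0 := by rintro h; simp [hw, h] at hwpos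
      have hxp : 0 < x (k+1) := by simpa [hw] using hwpos
      have hP' := hP (k+1) (by omega)
      have hS' := hS (k+1) (by omega)
      rw [Nat.add_sub_cancel] at hP' hS'
      have hne : (a * x (k+1) + N^2)^2 ≠ 0 := by positivity
      have hx2ne : x (k+1+1) ≠ 0 := by
        rintro h; rw [h] at hP'; apply hne; rw [← hP']; ring
      have hsub : (x (k+1) - a)^2 ≠ 0 := by
        intro h; rw [h, zero_mul] at hP'; exact hne hP'.symm
      set t := N^2 * w (k+1) * v with ht
      have ht0 : 0 ≤ t := by positivity
      have hrec : w (k+1+1) + w k = 2*(w (k+1)+v)*((1-t)/(1+t)^2) := by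
        have e1 : w (k+1+1) + w k = (x (k+1+1) + x k)/(x (k+1+1) * x k) := by
          simp only [hw]; field_simp; ring
        have e2 : (x (k+1+1) + x k)/(x (k+1+1) * x k) =
            (2 * (a * x (k+1) - N^2) * (x (k+1) + a)) / (a * x (k+1) + N^2)^2 := by
          rw [← hP', ← hS']
          rw [mul_div_mul_left _ _ hsub]
        rw [e1, e2, ht, hv]
        simp only [hw]
        have : a * x (k+1) + N^2 ≠ 0 := by positivity
        field_simp
        ring
      obtain ⟨f1, f2⟩ := cn_frac t ht0
      have hup : w (k+1+1) + w k ≤ 2*(w (k+1)+v) := by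
        rw [hrec]
        calc 2*(w (k+1)+v)*((1-t)/(1+t)^2) ≤ 2*(w (k+1)+v)*1 := by gcongr
          _ = _ := by ring
      have hlo : 2*(w (k+1)+v)*(1-3*t) ≤ w (k+1+1) + w k := by
        rw [hrec]; gcongr
      have hprod : N^2 * w (k+1) * (w (k+1) + v) ≤ (((k:ℚ)+1)^4 + ((k:ℚ)+1)^2)/n^4 := by
        have h1 : N * w (k+1) ≤ ((k:ℚ)+1)^2 / n^2 := by
          calc N * w (k+1) ≤ N * (((k+1:ℕ):ℚ)^2 * v) := by gcongr
            _ = ((k:ℚ)+1)^2 * (N*v) := by push_cast; ring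
            _ ≤ ((k:ℚ)+1)^2 * (1/n^2) := by gcongr
            _ = _ := by ring
        have h2 : N * (w (k+1) + v) ≤ (((k:ℚ)+1)^2 + 1) / n^2 := by
          calc N * (w (k+1) + v) = N * w (k+1) + N * v := by ring
            _ ≤ ((k:ℚ)+1)^2 / n^2 + 1/n^2 := by gcongr
            _ = _ := by ring
        calc N^2 * w (k+1) * (w (k+1) + v) = (N * w (k+1)) * (N * (w (k+1) + v)) := by ring
          _ ≤ (((k:ℚ)+1)^2 / n^2) * ((((k:ℚ)+1)^2 + 1) / n^2) := by gcongr
          _ = _ := by field_simp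
      refine ⟨hwpos, hwle, ?_, ?_⟩
      · have hLs : L (k+1) = L k + 2*v*(1 - 3*((((k:ℚ)+1)^4 + ((k:ℚ)+1)^2)/n^4)) := by
          simp only [hL]
          rw [Finset.sum_range_succ]
          push_cast; ring
        have h3 : 2*v*(1 - 3*((((k:ℚ)+1)^4 + ((k:ℚ)+1)^2)/n^4)) ≤
            2*v*(1 - 3*(N^2 * w (k+1) * (w (k+1) + v))) := by gcongr
        have h4 : 2*(w (k+1)+v)*(1-3*t) - 2 * w (k+1) =
            2*v*(1 - 3*(N^2 * w (k+1) * (w (k+1) + v))) := by rw [ht]; ring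
        rw [hLs]; linarith
      · push_cast
        linarith
  have hw1 : w 1 = v := by simp only [hw, hx1, hv]
  have fin : ∀ k, 2 ≤ k → k ≤ n → 2 * v ≤ w k := by
    intro k hk
    induction k, hk using Nat.le_induction with
    | base =>
      intro h
      obtain ⟨-, -, h3, -⟩ := main 1 le_rfl (by omega)
      have := hLv 1 (by omega)
      rw [show 1 + 1 = 2 from rfl] at h3
      linarith
    | succ k hk ih =>
      intro h
      obtain ⟨-, -, h3, -⟩ := main k (by omega) h
      have := hLv k (by omega)
      have := ih (by omega)
      linarith
  intro k hk hkn
  have h := fin k hk hkn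
  have hpos : 0 < w k := by linarith
  have hxp : 0 < x k := by simpa [hw] using hpos
  refine ⟨hxp, ?_⟩
  simp only [hw, hv] at h
  rw [le_div_iff₀ hxp] at h
  have : 2 * (1/a) * x k * a ≤ 1 * a := by gcongr
  have e : 2 * (1/a) * x k * a = 2 * x k := by field_simp
  linarith

theorem cn_numeric (a : ℤ) (N n : ℕ) (hN : 0 < N) (hsq : Squarefree N) (hn : 3 ≤ n)
    (hodd : Odd n) (ha : (n:ℤ)^2 * N ≤ a)
    (x : ℕ → ℚ) (hx1 : x 1 = a)
    (hx2 : x 2 * (4 * a * ((a:ℚ)^2-(N:ℚ)^2)) = ((a:ℚ)^2+(N:ℚ)^2)^2)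
    (hP : ∀ k, 2 ≤ k → (x k - a)^2 * (x (k+1) * x (k-1)) = (a * x k + (N:ℚ)^2)^2)
    (hS : ∀ k, 2 ≤ k → (x k - a)^2 * (x (k+1) + x (k-1)) = 2 * (a * x k - (N:ℚ)^2) * (x k + a))
    (hsqr : ∀ k, 2 ≤ k → Even k → (∃ s, x k = s^2) ∧ (∃ t, x k - N = t^2)) :
    (x n).den ≠ 1 := by
  have haQ : (n:ℚ)^2 * N ≤ a := by exact_mod_cast ha
  have hreal := cn_real a N n (by exact_mod_cast hN) hn haQ x hx1 hx2 hP hS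
  have hNQ : (1:ℚ) ≤ N := by exact_mod_cast hN
  have hn3 : (3:ℚ) ≤ n := by exact_mod_cast hn
  have ha9 : (9:ℚ) * N ≤ a := by
    refine le_trans ?_ haQ
    gcongr; nlinarith
  have hsqZ : Squarefree (N:ℤ) := Int.squarefree_natCast.2 hsq
  set d := Int.gcd a N with hd
  have hdN : (d:ℚ) ≤ N := by
    have : d ∣ N := by
      have := Int.gcd_dvd_right a (N:ℤ); exact_mod_cast this
    exact_mod_cast Nat.le_of_dvd hN this
  have hd0 : (0:ℚ) < d := by
    have : 0 < d := Int.gcd_pos_of_ne_zero_right _ (by exact_mod_cast hN.ne')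
    exact_mod_cast this
  have hden : ∀ k, (1:ℚ) ≤ ((x k).den:ℚ) := fun k => by exact_mod_cast (x k).den_pos
  -- the local step
  have step : ∀ k, 2 ≤ k → k ≤ n → ∃ g : ℕ, 0 < g ∧ g ∣ 4 * d^4 ∧ (Even k → g ∣ 4) ∧
      (a:ℚ)^2/4 * ((x k).den:ℚ)^2 ≤ g * (((x (k+1)).den:ℚ) * ((x (k-1)).den:ℚ)) := by
    intro k hk hkn
    obtain ⟨hxp, hxle⟩ := hreal k hk hkn
    have hz : ∀ j, ((x j).den:ℚ) ≠ 0 := fun j => by exact_mod_cast (x j).den_ne_zero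
    have hxx : ∀ j, x j = ((x j).num:ℚ) / ((x j).den:ℚ) := fun j => (Rat.num_div_den _).symm
    have hxx' : ∀ j, ((x j).num:ℚ) = x j * ((x j).den:ℚ) := fun j => (Rat.mul_den_eq_num _).symm
    have hne : (x k).num - a * ((x k).den:ℤ) ≠ 0 := by
      intro h
      have h' : ((x k).num:ℚ) - a * ((x k).den:ℚ) = 0 := by exact_mod_cast h
      rw [hxx' k] at h'
      have : (x k - a) * ((x k).den:ℚ) = 0 := by linear_combination h'
      rcases mul_eq_zero.1 this with h | h
      · linarith
      · exact hz k h
    have hA : ((x k).num - a * ((x k).den:ℤ))^2 * ((x (k+1)).num * (x (k-1)).num) =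
        (a * (x k).num + (N:ℤ)^2*((x k).den:ℤ))^2 * (((x (k+1)).den:ℤ) * ((x (k-1)).den:ℤ)) := by
      have : (((x k).num:ℚ) - a * ((x k).den:ℚ))^2 * (((x (k+1)).num:ℚ) * ((x (k-1)).num:ℚ)) =
        (a * ((x k).num:ℚ) + (N:ℚ)^2*((x k).den:ℚ))^2 * (((x (k+1)).den:ℚ) * ((x (k-1)).den:ℚ)) := by
        rw [hxx' k, hxx' (k+1), hxx' (k-1)]
        linear_combination ((x k).den:ℚ)^2 * ((x (k+1)).den:ℚ) * ((x (k-1)).den:ℚ) * hP k hk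
      exact_mod_cast this
    have hM : ((x k).num - a * ((x k).den:ℤ))^2 *
        ((x (k+1)).num * ((x (k-1)).den:ℤ) + (x (k-1)).num * ((x (k+1)).den:ℤ)) =
        2 * (a * (x k).num - (N:ℤ)^2*((x k).den:ℤ)) * ((x k).num + a * ((x k).den:ℤ)) *
          (((x (k+1)).den:ℤ) * ((x (k-1)).den:ℤ)) := by
      have : (((x k).num:ℚ) - a * ((x k).den:ℚ))^2 *
        (((x (k+1)).num:ℚ) * ((x (k-1)).den:ℚ) + ((x (k-1)).num:ℚ) * ((x (k+1)).den:ℚ)) =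
        2 * (a * ((x k).num:ℚ) - (N:ℚ)^2*((x k).den:ℚ)) * (((x k).num:ℚ) + a * ((x k).den:ℚ)) *
          (((x (k+1)).den:ℚ) * ((x (k-1)).den:ℚ)) := by
        rw [hxx' k, hxx' (k+1), hxx' (k-1)]
        linear_combination ((x k).den:ℚ)^2 * ((x (k+1)).den:ℚ) * ((x (k-1)).den:ℚ) * hS k hk
      exact_mod_cast this
    obtain ⟨g, hg0, hg1, hg2⟩ := cn_g_exists a N _ _ _ _ _ _ (Rat.isCoprime_num_den _)
      (Rat.isCoprime_num_den _) hne hA hM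
    have hgpos : 0 < g := by
      have h1 : 0 < ((x k).num - a * ((x k).den:ℤ))^2 := by positivity
      rw [hg0] at h1
      have h2 : (0:ℤ) ≤ ((x (k+1)).den:ℤ) * ((x (k-1)).den:ℤ) := by positivity
      exact pos_of_mul_pos_left h1 h2
    lift g to ℕ using hgpos.le
    have hdv0 : (g:ℤ) ∣ ((x k).num - a * ((x k).den:ℤ))^2 := ⟨_, hg0⟩
    have hg4 := cn_g_dvd a N _ _ g hsqZ (Rat.isCoprime_num_den _) hdv0 hg1 hg2
    refine ⟨g, by exact_mod_cast hgpos, hg4, ?_, ?_⟩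
    · intro hev
      obtain ⟨hs, ht⟩ := hsqr k hk hev
      exact cn_g_even a N (x k) g hsqZ hdv0 hg4 hs (by simpa using ht)
    · have hg0' : (((x k).num:ℚ) - a * ((x k).den:ℚ))^2 =
        g * (((x (k+1)).den:ℚ) * ((x (k-1)).den:ℚ)) := by exact_mod_cast hg0
      rw [← hg0', hxx' k, show x k * ((x k).den:ℚ) - a * ((x k).den:ℚ) = (x k - a) * ((x k).den:ℚ) by ring, mul_pow]
      gcongr
      have : 0 < (a:ℚ) := by linarith
      nlinarith
  have ha0 : (0:ℚ) < a := by linarith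
  have main : ∀ k, 1 ≤ k → k + 1 ≤ n →
      (Even k → (a:ℚ)^2 * (x k).den ≤ 16 * (x (k+1)).den) ∧ (Odd k → ((x k).den:ℚ) ≤ (x (k+1)).den) := by
    intro k hk
    induction k, hk using Nat.le_induction with
    | base =>
      intro _
      refine ⟨fun h => absurd h (by decide), fun _ => ?_⟩
      rw [hx1, Rat.den_intCast]
      simpa using hden 2
    | succ k hk ih =>
      intro hkn
      obtain ⟨i1, i2⟩ := ih (by omega)
      obtain ⟨g, hg0, hg4, hgE, hineq⟩ := step (k+1) (by omega) (by omega)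
      rw [Nat.add_sub_cancel] at hineq
      have z0 := hden k
      have z1 := hden (k+1)
      have z2 := hden (k+1+1)
      set Z0 : ℚ := ((x k).den:ℚ)
      set Z1 : ℚ := ((x (k+1)).den:ℚ)
      set Z2 : ℚ := ((x (k+1+1)).den:ℚ)
      constructor
      · intro hev
        have hk' : Odd k := by
          rcases Nat.even_or_odd k with h | h
          · exact absurd hev (by simpa using h.add_one)
          · exact h
        have hg : (g:ℚ) ≤ 4 := by exact_mod_cast Nat.le_of_dvd (by norm_num) (hgE hev)
        have h01 := i2 hk'
        have h1 : (a:ℚ)^2/4 * (Z1 * Z0) ≤ 4 * (Z2 * Z0) := by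
          calc (a:ℚ)^2/4 * (Z1 * Z0) ≤ (a:ℚ)^2/4 * (Z1 * Z1) := by gcongr
            _ = (a:ℚ)^2/4 * Z1^2 := by ring
            _ ≤ _ := hineq
            _ ≤ _ := by gcongr
        have h2 : ((a:ℚ)^2 * Z1) * Z0 ≤ (16 * Z2) * Z0 := by linarith
        exact le_of_mul_le_mul_right h2 (by linarith)
      · intro hod
        have hk' : Even k := by
          rcases Nat.even_or_odd k with h | h
          · exact h
          · exact absurd hod (by simpa using h.add_one)
        have hg : (g:ℚ) ≤ 4 * d^4 := by
          have hdn : 0 < d := by exact_mod_cast hd0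
          exact_mod_cast Nat.le_of_dvd (by positivity) hg4
        have h01 := i1 hk'
        have had : 4 * (d:ℚ) ≤ a := by linarith
        have h1 : (a:ℚ)^2/4 * (Z1 * ((a:ℚ)^2 * Z0 / 16)) ≤ 4 * d^4 * (Z2 * Z0) := by
          calc (a:ℚ)^2/4 * (Z1 * ((a:ℚ)^2 * Z0 / 16)) ≤ (a:ℚ)^2/4 * (Z1 * Z1) := by
                gcongr; linarith
            _ = (a:ℚ)^2/4 * Z1^2 := by ring
            _ ≤ _ := hineq
            _ ≤ _ := by gcongr
        have h2 : (4 * (d:ℚ))^4 ≤ (a:ℚ)^4 := by gcongr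
        have h3 : (4 * (d:ℚ))^4 * (Z1 * Z0) ≤ (4 * (d:ℚ))^4 * (Z2 * Z0) := by
          calc (4 * (d:ℚ))^4 * (Z1 * Z0) ≤ (a:ℚ)^4 * (Z1 * Z0) := by gcongr
            _ = 64 * ((a:ℚ)^2/4 * (Z1 * ((a:ℚ)^2 * Z0 / 16))) := by ring
            _ ≤ 64 * (4 * d^4 * (Z2 * Z0)) := by gcongr
            _ = _ := by ring
        have h4 := le_of_mul_le_mul_left h3 (by positivity)
        exact le_of_mul_le_mul_right h4 (by linarith)
  obtain ⟨m, rfl⟩ := hodd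
  obtain ⟨h1, -⟩ := main (2*m) (by omega) le_rfl
  have h := h1 (even_two_mul m)
  intro h1
  rw [h1] at h
  have := hden (2*m)
  have : (81:ℚ) ≤ (a:ℚ)^2 := by nlinarith
  have : (81:ℚ) * 1 ≤ (a:ℚ)^2 * (x (2*m)).den := by gcongr
  norm_num at h
  linarith

theorem cn_eqn (N : ℕ) {x y : ℚ} (h : (congruentCurve N).Nonsingular x y) :
    y^2 = x^3 - (N:ℚ)^2 * x := by
  have := (WeierstrassCurve.Affine.equation_iff _ _).1 h.1
  simp only [congruentCurve] at this
  linear_combination this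

theorem cn_addX (N : ℕ) {x₁ y₁ x₂ y₂ x₃ y₃ : ℚ} (h₁ : (congruentCurve N).Nonsingular x₁ y₁)
    (h₂ : (congruentCurve N).Nonsingular x₂ y₂) (h₃ : (congruentCurve N).Nonsingular x₃ y₃)
    (hx : x₁ ≠ x₂)
    (h : WeierstrassCurve.Affine.Point.some _ _ h₁ + WeierstrassCurve.Affine.Point.some _ _ h₂
      = WeierstrassCurve.Affine.Point.some _ _ h₃) :
    x₃ * (x₁ - x₂)^2 = (y₁ - y₂)^2 - (x₁ + x₂) * (x₁ - x₂)^2 := by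
  rw [WeierstrassCurve.Affine.Point.add_of_X_ne hx] at h
  have h := (WeierstrassCurve.Affine.Point.some.inj h).1
  rw [WeierstrassCurve.Affine.slope_of_X_ne hx, WeierstrassCurve.Affine.addX] at h
  simp only [congruentCurve] at h
  have : x₁ - x₂ ≠ 0 := sub_ne_zero.2 hx
  rw [← h]
  field_simp
  ring

theorem cn_dblX (N : ℕ) {x₁ y₁ x₃ y₃ : ℚ} (h₁ : (congruentCurve N).Nonsingular x₁ y₁)
    (h₃ : (congruentCurve N).Nonsingular x₃ y₃)
    (h : WeierstrassCurve.Affine.Point.some _ _ h₁ + WeierstrassCurve.Affine.Point.some _ _ h₁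
      = WeierstrassCurve.Affine.Point.some _ _ h₃) :
    y₁ ≠ 0 ∧ x₃ * (4 * y₁^2) = (x₁^2 + (N:ℚ)^2)^2 := by
  have hneg : (congruentCurve N).negY x₁ y₁ = -y₁ := by
    simp [WeierstrassCurve.Affine.negY, congruentCurve]
  have hy : y₁ ≠ 0 := by
    intro hy
    rw [WeierstrassCurve.Affine.Point.add_self_of_Y_eq (by rw [hneg, hy]; simp)] at h
    exact WeierstrassCurve.Affine.Point.some_ne_zero _ h.symm
  have hyn : y₁ ≠ (congruentCurve N).negY x₁ y₁ := by
    rw [hneg]; intro h; apply hy; linarith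
  refine ⟨hy, ?_⟩
  rw [WeierstrassCurve.Affine.Point.add_self_of_Y_ne hyn] at h
  have h := (WeierstrassCurve.Affine.Point.some.inj h).1
  rw [WeierstrassCurve.Affine.slope_of_Y_ne rfl hyn, WeierstrassCurve.Affine.addX, hneg] at h
  simp only [congruentCurve] at h
  have e := cn_eqn N h₁
  rw [← h]
  have h2 : y₁ - -y₁ = 2 * y₁ := by ring
  rw [h2]
  field_simp
  ring_nf
  have e4 : y₁^4 = (x₁^3 - (N:ℚ)^2 * x₁)^2 := by rw [← e]; ring
  simp only [e4, e]
  ring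

theorem stmt9 (N : ℕ) (hN : 0 < N) (hsq : Squarefree N)
    (a b : ℤ) (h : (congruentCurve N).Nonsingular (a : ℚ) (b : ℚ))
    (hPtors : ∀ m : ℤ, 1 ≤ m →
      m • (WeierstrassCurve.Affine.Point.some _ _ h) ≠ 0)
    (n : ℤ) (hn : 3 ≤ n) (hnodd : Odd n)
    (hint : IsIntegralPoint (n • (WeierstrassCurve.Affine.Point.some _ _ h))) :
    a < n ^ 2 * (N : ℤ) ∧ |a| < n ^ 2 * (N : ℤ) := by
  have heq := cn_eqn N h
  have hNZ : (0:ℤ) < N := by exact_mod_cast hN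
  have hn9 : 9 ≤ n^2 := by nlinarith
  have key : a < n ^ 2 * (N : ℤ) := by
    by_contra hlt
    push Not at hlt
    lift n to ℕ using by omega
    have hn' : 3 ≤ n := by exact_mod_cast hn
    have hno : Odd n := by exact_mod_cast hnodd
    set P := WeierstrassCurve.Affine.Point.some _ _ h with hPdef
    have hnt : ∀ m : ℕ, 1 ≤ m → m • P ≠ 0 := fun m hm => by
      have := hPtors m (by exact_mod_cast hm)
      rwa [natCast_zsmul] at this
    have hex : ∀ m : ℕ, ∃ x y : ℚ, 1 ≤ m → ∃ hm : (congruentCurve N).Nonsingular x y,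
        m • P = WeierstrassCurve.Affine.Point.some _ _ hm := by
      intro m
      by_cases hm : 1 ≤ m
      · rcases hmP : m • P with _ | ⟨x, y, hxy⟩
        · exact absurd hmP (hnt m hm)
        · exact ⟨x, y, fun _ => ⟨hxy, rfl⟩⟩
      · exact ⟨0, 0, fun h => absurd h hm⟩
    choose x y hxy using hex
    have hx1 : x 1 = a := by
      obtain ⟨h1, h1'⟩ := hxy 1 le_rfl
      rw [one_smul] at h1'
      exact (WeierstrassCurve.Affine.Point.some.inj h1').1.symm
    have hdbl : ∀ k, 1 ≤ k → y k ≠ 0 ∧ x (2*k) * (4 * y k^2) = (x k^2 + (N:ℚ)^2)^2 ∧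
        y k^2 = x k^3 - (N:ℚ)^2 * x k := by
      intro k hk
      obtain ⟨h1, h1'⟩ := hxy k hk
      obtain ⟨h2, h2'⟩ := hxy (2*k) (by omega)
      have := cn_dblX N h1 h2 (by rw [← h1', ← h2', two_mul, add_smul])
      exact ⟨this.1, this.2, cn_eqn N h1⟩
    have hadd : ∀ k, 2 ≤ k → x k ≠ a ∧
        x (k+1) * (x k - a)^2 = (y k - b)^2 - (x k + a) * (x k - a)^2 ∧
        x (k-1) * (x k - a)^2 = (y k + b)^2 - (x k + a) * (x k - a)^2 ∧
        y k^2 = x k^3 - (N:ℚ)^2 * x k := by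
      intro k hk
      obtain ⟨h0, h0'⟩ := hxy (k-1) (by omega)
      obtain ⟨h1, h1'⟩ := hxy k (by omega)
      obtain ⟨h2, h2'⟩ := hxy (k+1) (by omega)
      have hneP : k • P ≠ P := by
        intro hh
        apply hnt (k-1) (by omega)
        have : (k-1) • P + P = P := by
          rw [← succ_nsmul, Nat.sub_add_cancel (by omega)]; exact hh
        simpa using this
      have hneP' : k • P ≠ -P := by
        intro hh
        apply hnt (k+1) (by omega)
        rw [succ_nsmul, hh]; simp
      have hxne : x k ≠ a := by
        intro hxa
        have ek := cn_eqn N h1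
        have : (y k - b) * (y k + b) = 0 := by
          rw [hxa] at ek; linear_combination ek - heq
        rcases mul_eq_zero.1 this with h' | h'
        · apply hneP
          rw [h1', hPdef, WeierstrassCurve.Affine.Point.some.injEq]
          exact ⟨hxa, by linarith⟩
        · apply hneP'
          rw [h1', hPdef, WeierstrassCurve.Affine.Point.neg_some,
            WeierstrassCurve.Affine.Point.some.injEq]
          refine ⟨hxa, ?_⟩
          simp only [WeierstrassCurve.Affine.negY, congruentCurve]
          linarith
      refine ⟨hxne, ?_, ?_, cn_eqn N h1⟩
      · exact cn_addX N h1 h h2 hxne (by rw [← h1', ← h2', succ_nsmul])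
      · have hneg : (congruentCurve N).Nonsingular (a:ℚ) (-b:ℚ) := by
          have := (WeierstrassCurve.Affine.nonsingular_neg (W' := congruentCurve N) (a:ℚ) (b:ℚ)).2 h
          simpa [WeierstrassCurve.Affine.negY, congruentCurve] using this
        have hnegP : WeierstrassCurve.Affine.Point.some _ _ hneg = -P := by
          rw [hPdef, WeierstrassCurve.Affine.Point.neg_some,
            WeierstrassCurve.Affine.Point.some.injEq]
          simp [WeierstrassCurve.Affine.negY, congruentCurve]
        have := cn_addX N h1 hneg h0 hxne (by
          rw [← h1', ← h0', hnegP]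
          have : k • P = (k-1) • P + P := by
            rw [← succ_nsmul, Nat.sub_add_cancel (by omega)]
          rw [this]; simp)
        rw [this]; ring
    refine cn_numeric a N n hN hsq hn' hno hlt x hx1 ?_ ?_ ?_ ?_ ?_
    · obtain ⟨-, h2, h3⟩ := hdbl 1 le_rfl
      rw [h3, hx1] at h2
      rw [show 2 * 1 = 2 from rfl] at h2
      linear_combination h2
    · intro k hk
      obtain ⟨hne, e1, e2, e3⟩ := hadd k hk
      have hs : (x k - a)^2 ≠ 0 := pow_ne_zero 2 (sub_ne_zero.2 hne)
      apply mul_left_cancel₀ hs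
      have : (x k - a)^2 * ((x k - a)^2 * (x (k+1) * x (k-1))) =
        (x (k+1) * (x k - a)^2) * (x (k-1) * (x k - a)^2) := by ring
      rw [this, e1, e2]
      have : ((y k - b)^2 - (x k + a) * (x k - a)^2) * ((y k + b)^2 - (x k + a) * (x k - a)^2)
        = (y k^2 - (b:ℚ)^2)^2 - 2 * (x k + a) * (x k - a)^2 * (y k^2 + (b:ℚ)^2)
          + ((x k + a) * (x k - a)^2)^2 := by ring
      rw [this, e3, heq]
      ring
    · intro k hk
      obtain ⟨hne, e1, e2, e3⟩ := hadd k hk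
      linear_combination e1 + e2 + 2 * e3 + 2 * heq
    · intro k hk hev
      obtain ⟨m, rfl⟩ := hev
      rw [← two_mul]
      obtain ⟨hy, h2, h3⟩ := hdbl m (by omega)
      have hx : x (2*m) = (x m^2 + (N:ℚ)^2)^2 / (4 * y m^2) := by
        rw [eq_div_iff (by positivity)]; exact h2
      refine ⟨⟨(x m^2 + (N:ℚ)^2)/(2 * y m), ?_⟩, ⟨(x m^2 - 2*N*x m - (N:ℚ)^2)/(2*y m), ?_⟩⟩
      · rw [hx, div_pow]; ring
      · rw [hx, div_pow, mul_pow, show (2:ℚ)^2 = 4 by norm_num, eq_div_iff (by positivity),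
          sub_mul, div_mul_cancel₀ _ (by positivity), h3]
        ring
    · obtain ⟨x', y', h', e', hd⟩ := hint
      obtain ⟨h1, h1'⟩ := hxy n (by omega)
      rw [natCast_zsmul, h1'] at e'
      rw [(WeierstrassCurve.Affine.Point.some.inj e').1]
      exact hd
  refine ⟨key, ?_⟩
  rw [abs_lt]
  refine ⟨?_, key⟩
  have hge : -(N:ℤ) ≤ a := by
    have heqZ : b^2 = a^3 - (N:ℤ)^2 * a := by exact_mod_cast heq
    by_contra hlt
    push Not at hlt
    have h1 : 0 < a^2 - (N:ℤ)^2 := by nlinarith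
    have h2 : a * (a^2 - (N:ℤ)^2) < 0 := mul_neg_of_neg_of_pos (by linarith) h1
    nlinarith [sq_nonneg b]
  nlinarith
end

section
/- Let P be a polynomial with real coefficients of degree d, and let P^{(k)} denote its k-th derivative. Suppose W > 0 is a real number such that W² > 2^{−k}·P^{(k)}(log W) for every 0 ≤ k ≤ d. Then x² > P(log x) for all real x ≥ W. -/
theorem stmt11 (P : Polynomial ℝ) (d : ℕ) (hd : P.natDegree = d)
    (W : ℝ) (hW : 0 < W)
    (h : ∀ k : ℕ, k ≤ d →
      (2 : ℝ) ^ (-(k : ℤ)) * (Polynomial.derivative^[k] P).eval (Real.log W) < W ^ 2) :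
    ∀ x : ℝ, W ≤ x → P.eval (Real.log x) < x ^ 2 := by
  intro x hx
  have hx0 : 0 < x := lt_of_lt_of_le hW hx
  obtain ⟨t, ht⟩ : ∃ t, t = Real.log x - Real.log W := ⟨_, rfl⟩
  have ht0 : 0 ≤ t := by
    rw [ht]; exact sub_nonneg.mpr (Real.log_le_log hW hx)
  have e1 : P.eval (Real.log x) = (Polynomial.taylor (Real.log W) P).eval t := by
    rw [Polynomial.taylor_eval]; congr 1; rw [ht]; ring
  have e2 : x ^ 2 = W ^ 2 * Real.exp (2 * t) := by
    have : Real.exp (2 * t) = (x / W) ^ 2 := by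
      rw [ht, ← Real.log_div hx0.ne' hW.ne', two_mul, Real.exp_add,
        Real.exp_log (div_pos hx0 hW), sq]
    rw [this]; field_simp
  have key : ∀ k, k ≤ d → (Polynomial.taylor (Real.log W) P).coeff k < W ^ 2 * 2 ^ k / k.factorial := by
    intro k hk
    have h1 := h k hk
    rw [Polynomial.taylor_coeff]
    rw [← Polynomial.factorial_smul_hasseDeriv] at h1
    have hf : (0 : ℝ) < k.factorial := by positivity
    rw [lt_div_iff₀ hf]
    rw [zpow_neg, zpow_natCast, inv_mul_lt_iff₀ (by positivity)] at h1
    rw [LinearMap.smul_apply, Polynomial.eval_smul, nsmul_eq_mul] at h1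
    linarith
  rw [e1, e2, Polynomial.eval_eq_sum_range, Polynomial.natDegree_taylor, hd]
  calc _ < ∑ k ∈ Finset.range (d + 1), W ^ 2 * ((2 * t) ^ k / k.factorial) := by
        apply Finset.sum_lt_sum
        · intro k hk
          have := mul_le_mul_of_nonneg_right
            (key k (Nat.lt_succ_iff.mp (Finset.mem_range.mp hk))).le (pow_nonneg ht0 k)
          refine this.trans (le_of_eq ?_)
          rw [mul_pow]; ring
        · refine ⟨0, by simp, ?_⟩
          have := key 0 (Nat.zero_le _)
          simpa using this
    _ = W ^ 2 * ∑ k ∈ Finset.range (d + 1), (2 * t) ^ k / k.factorial := by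
        rw [Finset.mul_sum]
    _ ≤ _ := by
        gcongr
        exact Real.sum_le_exp_of_nonneg (by positivity) _
end

section
/- Let A, B be real numbers, not both zero, let f(t) = t³ + A·t + B, and let e₁, e₂, e₃ ∈ ℂ be the (complex) roots of f counted with multiplicity. Let x₀ be a real number with x₀ ≥ 2·max{|e₁|, |e₂|, |e₃|}. Then f(t) > 0 for all t ≥ x₀, and the improper integral I = (1/2)·∫_{x₀}^{∞} dt/√(f(t)) satisfies (√2/4)·x₀^{−1/2} ≤ I ≤ 2√2·x₀^{−1/2}. -/
open MeasureTheory

theorem stmt12 (A B : ℝ) (hAB : ¬(A = 0 ∧ B = 0)) (e₁ e₂ e₃ : ℂ)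
    (hroots : ∀ t : ℂ, t ^ 3 + (A : ℂ) * t + (B : ℂ) = (t - e₁) * (t - e₂) * (t - e₃))
    (x₀ : ℝ)
    (hx₀ : 2 * max ‖e₁‖ (max ‖e₂‖ ‖e₃‖) ≤ x₀) :
    (∀ t : ℝ, x₀ ≤ t → 0 < t ^ 3 + A * t + B) ∧
    Real.sqrt 2 / 4 * x₀ ^ (-(1 / 2 : ℝ)) ≤
      (1 / 2) * ∫ t in Set.Ioi x₀, 1 / Real.sqrt (t ^ 3 + A * t + B) ∧
    (1 / 2) * (∫ t in Set.Ioi x₀, 1 / Real.sqrt (t ^ 3 + A * t + B)) ≤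
      2 * Real.sqrt 2 * x₀ ^ (-(1 / 2 : ℝ)) := by
  have hB : (B : ℂ) = -(e₁ * e₂ * e₃) := by linear_combination hroots 0
  have hA : (A : ℂ) = e₁ * e₂ + e₁ * e₃ + e₂ * e₃ := by
    linear_combination (hroots 1 - hroots (-1)) / 2
  obtain ⟨M, hM⟩ : ∃ M, M = x₀ / 2 := ⟨_, rfl⟩
  have h1 : ‖e₁‖ ≤ M := by
    have := le_max_left ‖e₁‖ (max ‖e₂‖ ‖e₃‖); linarith
  have h2 : ‖e₂‖ ≤ M := by
    have := (le_max_left ‖e₂‖ ‖e₃‖).trans (le_max_right ‖e₁‖ _); linarith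
  have h3 : ‖e₃‖ ≤ M := by
    have := (le_max_right ‖e₂‖ ‖e₃‖).trans (le_max_right ‖e₁‖ _); linarith
  have hM0 : 0 ≤ M := (norm_nonneg _).trans h1
  have hAb : |A| ≤ 3 * M ^ 2 := by
    have : |A| = ‖(A : ℂ)‖ := by simp
    rw [this, hA]
    calc _ ≤ ‖e₁ * e₂‖ + ‖e₁ * e₃‖ + ‖e₂ * e₃‖ := norm_add₃_le
      _ = ‖e₁‖ * ‖e₂‖ + ‖e₁‖ * ‖e₃‖ + ‖e₂‖ * ‖e₃‖ := by simp only [norm_mul]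
      _ ≤ M * M + M * M + M * M := by gcongr
      _ = _ := by ring
  have hBb : |B| ≤ M ^ 3 := by
    have : |B| = ‖(B : ℂ)‖ := by simp
    rw [this, hB]
    calc _ = ‖e₁‖ * ‖e₂‖ * ‖e₃‖ := by simp only [norm_mul, norm_neg]
      _ ≤ M * M * M := by gcongr
      _ = _ := by ring
  have hMp : 0 < M := by
    rcases hM0.lt_or_eq with h | h
    · exact h
    · exfalso
      subst h
      apply hAB
      constructor
      · apply abs_nonpos_iff.1; simpa using hAb
      · apply abs_nonpos_iff.1; simpa using hBb
  have hx : 0 < x₀ := by linarith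
  have key : ∀ t : ℝ, x₀ ≤ t → t ^ 3 / 8 ≤ t ^ 3 + A * t + B ∧ t ^ 3 + A * t + B ≤ 8 * t ^ 3 := by
    intro t ht
    have ht0 : 0 < t := hx.trans_le ht
    have hMt : M ≤ t / 2 := by linarith
    have a1 : |A * t| ≤ 3 / 4 * t ^ 3 := by
      rw [abs_mul, abs_of_pos ht0]
      calc |A| * t ≤ 3 * (t / 2) ^ 2 * t := by
            gcongr; exact hAb.trans (by gcongr)
        _ = _ := by ring
    have a2 : |B| ≤ t ^ 3 / 8 := by
      calc |B| ≤ (t / 2) ^ 3 := hBb.trans (by gcongr)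
        _ = _ := by ring
    have := abs_le.1 a1
    have := abs_le.1 a2
    have : 0 < t ^ 3 := by positivity
    constructor <;> linarith
  have pos : ∀ t : ℝ, x₀ ≤ t → 0 < t ^ 3 + A * t + B := by
    intro t ht
    have ht0 : 0 < t := hx.trans_le ht
    have : 0 < t ^ 3 / 8 := by positivity
    linarith [(key t ht).1]
  have s8 : Real.sqrt 8 = 2 * Real.sqrt 2 := by
    rw [show (8 : ℝ) = 2 ^ 2 * 2 by norm_num, Real.sqrt_mul (by norm_num),
      Real.sqrt_sq (by norm_num)]
  have s2 : Real.sqrt 2 * Real.sqrt 2 = 2 := Real.mul_self_sqrt (by norm_num)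
  have s2p : 0 < Real.sqrt 2 := by positivity
  have hp : ∀ t : ℝ, 0 < t → t ^ (-(3 / 2) : ℝ) = 1 / Real.sqrt (t ^ 3) := by
    intro t ht
    rw [Real.rpow_neg ht.le, Real.sqrt_eq_rpow, ← Real.rpow_natCast t 3, ← Real.rpow_mul ht.le]
    norm_num
  have up : ∀ t ∈ Set.Ioi x₀, 1 / Real.sqrt (t ^ 3 + A * t + B) ≤
      2 * Real.sqrt 2 * t ^ (-(3 / 2) : ℝ) := by
    intro t ht
    have ht' : x₀ ≤ t := le_of_lt ht
    have ht0 : 0 < t := hx.trans_le ht'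
    calc 1 / Real.sqrt (t ^ 3 + A * t + B) ≤ 1 / Real.sqrt (t ^ 3 / 8) := by
          apply one_div_le_one_div_of_le (by positivity)
          exact Real.sqrt_le_sqrt (key t ht').1
      _ = _ := by
          rw [hp t ht0, Real.sqrt_div (by positivity), s8]; field_simp
  have lo : ∀ t ∈ Set.Ioi x₀, Real.sqrt 2 / 4 * t ^ (-(3 / 2) : ℝ) ≤
      1 / Real.sqrt (t ^ 3 + A * t + B) := by
    intro t ht
    have ht' : x₀ ≤ t := le_of_lt ht
    have ht0 : 0 < t := hx.trans_le ht'
    calc _ = 1 / Real.sqrt (8 * t ^ 3) := by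
          have : 0 < Real.sqrt (t ^ 3) := by positivity
          rw [hp t ht0, Real.sqrt_mul (by positivity), s8]; field_simp; nlinarith
      _ ≤ _ := by
          apply one_div_le_one_div_of_le (Real.sqrt_pos.2 (pos t ht'))
          exact Real.sqrt_le_sqrt (key t ht').2
  have I0 : IntegrableOn (fun t : ℝ => t ^ (-(3 / 2) : ℝ)) (Set.Ioi x₀) :=
    integrableOn_Ioi_rpow_of_lt (by norm_num) hx
  have V0 : ∫ t in Set.Ioi x₀, t ^ (-(3 / 2) : ℝ) = 2 * x₀ ^ (-(1 / 2 : ℝ)) := by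
    rw [integral_Ioi_rpow_of_lt (by norm_num) hx,
      show (-(3 / 2) + 1 : ℝ) = -(1 / 2) by norm_num]
    ring
  have If : IntegrableOn (fun t : ℝ => 1 / Real.sqrt (t ^ 3 + A * t + B)) (Set.Ioi x₀) := by
    refine Integrable.mono' (I0.const_mul (2 * Real.sqrt 2)) ?_ ?_
    · exact Measurable.aestronglyMeasurable (by fun_prop)
    · refine (ae_restrict_iff' measurableSet_Ioi).2 (Filter.Eventually.of_forall fun t ht => ?_)
      rw [Real.norm_of_nonneg (by positivity)]
      exact up t ht
  refine ⟨pos, ?_, ?_⟩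
  · have := setIntegral_mono_on (I0.const_mul (Real.sqrt 2 / 4)) If measurableSet_Ioi lo
    rw [integral_const_mul, V0] at this
    linarith
  · have := setIntegral_mono_on If (I0.const_mul (2 * Real.sqrt 2)) measurableSet_Ioi up
    rw [integral_const_mul, V0] at this
    linarith
end
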